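/- Let E be a G-invariant Lebesgue-measurable subset of ℝ^d and let u be κ-harmonic in the upper half-space ℝ^{d+1}₊. Then the following are equivalent: (i) u has a finite non-tangential limit at (x,0) for almost every x ∈ E; (ii) u is non-tangentially bounded at (x,0) for almost every x ∈ E. -/

import Mathlib

/-!
A function with a non-tangential limit at `(x,0)` is bounded on truncated cones with vertex `(x,0)`,
so only the passage from boundedness to limits needs an argument.

*Reduction to bounded sets of uniform behaviour.* The reflections preserve Lebesgue measure and
`E` is invariant, so for almost every `x ∈ E` the point `x` is regular and `u` is non-tangentially
bounded at `x` and at all `σ_α x`. Each such `x` belongs to one of countably many compact sets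
(`goodSet`, `exists_goodSet`) which stay away from the reflecting hyperplanes and over which `u` and
the functions `u ∘ σ_α` are uniformly bounded on cones of fixed aperture and height.

*Removing the drift.* With the weight `wt = ∏ |⟨α,x⟩|^κ(α)`, the equation `Δ_κ u = 0` expresses the
Euclidean Laplacian of `v = wt · u` through the values of `u` and `u ∘ σ_α` alone, without
derivatives of `u` (`wt_mul_hasGLap`). Over a set `goodSet`, both `v` and its Laplacian are therefore
bounded on the union of the cones. Since `wt` is continuous and positive near regular points, limits
of `v` give limits of `u`.

*A local Fatou theorem* (`fatou_local`). A bounded function `v` with bounded Laplacian on the union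
of cones over a compact set `F` has non-tangential limits almost everywhere on `F`. The translate
of `v` upwards by `ε` is compared, by the maximum principle (`comparison`), with the Poisson integral
of its trace; the difference is dominated by a barrier made of the Poisson integral of the indicator
of the complement of `F`, a linear function of `y` and a concave quadratic function of `y`. The
traces converge weakly along an ultrafilter as `ε → 0` (`exists_weak_limit`), so `v` differs from one
Poisson integral by at most the barrier. By `poisson_fatou`, Poisson integrals converge
non-tangentially almost everywhere, and the barrier tends to `0` at almost every point of `F`.

Laplacians are understood as limits of second difference quotients (`HasGLap`), which is all that
the maximum principle requires and which makes Poisson integrals harmonic by dominated convergence.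
-/

open MeasureTheory Filter Metric
open scoped RealInnerProductSpace Topology

noncomputable section

/-- Euclidean space `ℝ^d`. -/
abbrev Ed (d : ℕ) : Type := EuclideanSpace ℝ (Fin d)

/-- The reflection `σ_α(x) = x - ⟨α,x⟩α` (for roots normalized by `⟨α,α⟩ = 2`). -/
def reflAt {d : ℕ} (α x : Ed d) : Ed d := x - ⟪α, x⟫ • α

/-- The reflection group `G` generated by the reflections `σ_α`, `α ∈ R`, realized as the
submonoid of self-maps of `ℝ^d` generated by the reflections (each reflection is an
involution, so this is in fact a group of transformations). -/
def dunklGroup {d : ℕ} (R : Finset (Ed d)) : Submonoid (Function.End (Ed d)) :=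
  Submonoid.closure {f : Function.End (Ed d) | ∃ α ∈ R, f = reflAt α}

/-- A (normalized) root system `R` with positive subsystem `Rp` and
`G`-invariant nonnegative multiplicity function `κ`. -/
structure IsRootSystem {d : ℕ} (R Rp : Finset (Ed d)) (κ : Ed d → ℝ) : Prop where
  nonzero : ∀ α ∈ R, α ≠ (0 : Ed d)
  norm_two : ∀ α ∈ R, ⟪α, α⟫ = (2 : ℝ)
  refl_mem : ∀ α ∈ R, ∀ β ∈ R, reflAt α β ∈ R
  pos_sub : Rp ⊆ R
  pos_split : ∀ α ∈ R, (α ∈ Rp ∧ ¬(-α ∈ Rp)) ∨ (¬(α ∈ Rp) ∧ -α ∈ Rp)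
  kappa_nonneg : ∀ α ∈ R, 0 ≤ κ α
  kappa_inv : ∀ σ ∈ dunklGroup R, ∀ α ∈ R, κ (σ α) = κ α

/-- `x ∈ ℝ^d` is regular if `⟨α,x⟩ ≠ 0` for all roots `α ∈ R`. -/
def isRegular {d : ℕ} (R : Finset (Ed d)) (x : Ed d) : Prop :=
  ∀ α ∈ R, ⟪α, x⟫ ≠ (0 : ℝ)

/-- Second directional derivative of `u` at `p` in direction `v`. -/
def pd2 {d : ℕ} (u : Ed d × ℝ → ℝ) (p v : Ed d × ℝ) : ℝ :=
  fderiv ℝ (fun q => fderiv ℝ u q v) p v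

/-- The Euclidean Laplacian on `ℝ^{d+1} = ℝ^d × ℝ`. -/
def lapE {d : ℕ} (u : Ed d × ℝ → ℝ) (p : Ed d × ℝ) : ℝ :=
  (∑ i : Fin d, pd2 u p (EuclideanSpace.single i 1, 0)) + pd2 u p (0, 1)

/-- The Dunkl Laplacian `Δ_κ` on `ℝ^{d+1}` (the Dunkl operators act in the `x`-variables). -/
def dunklLap {d : ℕ} (Rp : Finset (Ed d)) (κ : Ed d → ℝ) (u : Ed d × ℝ → ℝ)
    (p : Ed d × ℝ) : ℝ :=
  lapE u p + 2 * ∑ α ∈ Rp, κ α *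
    (fderiv ℝ u p (α, 0) / ⟪α, p.1⟫ - (u p - u (reflAt α p.1, p.2)) / ⟪α, p.1⟫ ^ 2)

/-- The open upper half-space `ℝ^{d+1}₊`. -/
def upperHS (d : ℕ) : Set (Ed d × ℝ) := {p | 0 < p.2}

/-- `u` is `κ`-harmonic on `Ω`: `u` is `C²` on `Ω` and `Δ_κ u = 0` at every point of `Ω`
whose `x`-coordinate is regular. -/
def KHarmonicOn {d : ℕ} (R Rp : Finset (Ed d)) (κ : Ed d → ℝ) (u : Ed d × ℝ → ℝ)
    (Ω : Set (Ed d × ℝ)) : Prop :=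
  ContDiffOn ℝ 2 u Ω ∧ ∀ p ∈ Ω, isRegular R p.1 → dunklLap Rp κ u p = 0

/-- The cone `Γ_a(x)` of aperture `a` with vertex `(x,0)`. -/
def cone {d : ℕ} (a : ℝ) (x : Ed d) : Set (Ed d × ℝ) :=
  {p | 0 < p.2 ∧ dist p.1 x < a * p.2}

/-- The truncated cone `Γ_a^h(x)`. -/
def coneT {d : ℕ} (a h : ℝ) (x : Ed d) : Set (Ed d × ℝ) :=
  {p | 0 < p.2 ∧ p.2 < h ∧ dist p.1 x < a * p.2}

/-- `u` has a finite non-tangential limit at `(x,0)`. -/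
def HasNTLimit {d : ℕ} (u : Ed d × ℝ → ℝ) (x : Ed d) : Prop :=
  ∀ a > (0 : ℝ), ∃ L : ℝ, Tendsto u (𝓝[cone a x] (x, (0 : ℝ))) (𝓝 L)

/-- `u` is non-tangentially bounded at `(x,0)`. -/
def NTBounded {d : ℕ} (u : Ed d × ℝ → ℝ) (x : Ed d) : Prop :=
  ∃ a > (0 : ℝ), ∃ h > (0 : ℝ), ∃ M : ℝ, ∀ p ∈ coneT a h x, |u p| ≤ M

/-- A subset of `ℝ^d` is `G`-invariant. -/
def GInvSet {d : ℕ} (R : Finset (Ed d)) (E : Set (Ed d)) : Prop :=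
  ∀ σ ∈ dunklGroup R, σ '' E = E

/-! ### A generalized Laplacian and its maximum principle -/

/-- Symmetric second difference quotient of `w` at `p` in direction `e` with step `s`. -/
def sdq {d : ℕ} (w : Ed d × ℝ → ℝ) (p e : Ed d × ℝ) (s : ℝ) : ℝ :=
  (w (p + s • e) + w (p - s • e) - 2 * w p) / s ^ 2

/-- The discrete Laplacian with step `s` along the coordinate axes of `ℝ^d × ℝ`. -/
def lapS {d : ℕ} (w : Ed d × ℝ → ℝ) (p : Ed d × ℝ) (s : ℝ) : ℝ :=
  (∑ i : Fin d, sdq w p (EuclideanSpace.single i 1, 0) s) + sdq w p (0, 1) s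

/-- `w` has generalized Laplacian `L` at `p`: the discrete Laplacians converge to `L` as the
step tends to `0`. No differentiability of `w` is required. -/
def HasGLap {d : ℕ} (w : Ed d × ℝ → ℝ) (p : Ed d × ℝ) (L : ℝ) : Prop :=
  Tendsto (lapS w p) (𝓝[>] 0) (𝓝 L)

lemma lapS_add {d : ℕ} (w₁ w₂ : Ed d × ℝ → ℝ) (p : Ed d × ℝ) (s : ℝ) :
    lapS (fun q => w₁ q + w₂ q) p s = lapS w₁ p s + lapS w₂ p s := by
  have h : ∀ e, sdq (fun q => w₁ q + w₂ q) p e s = sdq w₁ p e s + sdq w₂ p e s := by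
    intro e; simp only [sdq]; ring
  simp only [lapS, h, Finset.sum_add_distrib]; ring

lemma lapS_const_mul {d : ℕ} (c : ℝ) (w : Ed d × ℝ → ℝ) (p : Ed d × ℝ) (s : ℝ) :
    lapS (fun q => c * w q) p s = c * lapS w p s := by
  have h : ∀ e, sdq (fun q => c * w q) p e s = c * sdq w p e s := by
    intro e; simp only [sdq]; ring
  simp only [lapS, h, ← Finset.mul_sum]; ring

lemma HasGLap.add {d : ℕ} {w₁ w₂ : Ed d × ℝ → ℝ} {p : Ed d × ℝ} {L₁ L₂ : ℝ}
    (h₁ : HasGLap w₁ p L₁) (h₂ : HasGLap w₂ p L₂) :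
    HasGLap (fun q => w₁ q + w₂ q) p (L₁ + L₂) := by
  unfold HasGLap
  simp_rw [show lapS (fun q => w₁ q + w₂ q) p = fun s => lapS w₁ p s + lapS w₂ p s from
    funext (lapS_add _ _ _)]
  exact Tendsto.add h₁ h₂

lemma HasGLap.const_mul {d : ℕ} {w : Ed d × ℝ → ℝ} {p : Ed d × ℝ} {L : ℝ} (c : ℝ)
    (h : HasGLap w p L) : HasGLap (fun q => c * w q) p (c * L) := by
  unfold HasGLap
  simp_rw [show lapS (fun q => c * w q) p = fun s => c * lapS w p s from
    funext (lapS_const_mul _ _ _)]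
  exact Tendsto.const_mul c h

/-- Generalized Laplacians commute with vertical translations. -/
lemma HasGLap.shift {d : ℕ} {w : Ed d × ℝ → ℝ} {p : Ed d × ℝ} {L ε : ℝ}
    (h : HasGLap w (p.1, p.2 + ε) L) : HasGLap (fun q => w (q.1, q.2 + ε)) p L := by
  have : lapS (fun q => w (q.1, q.2 + ε)) p = lapS w (p.1, p.2 + ε) := by
    funext s
    have : ∀ e, sdq (fun q => w (q.1, q.2 + ε)) p e s = sdq w (p.1, p.2 + ε) e s := by
      intro e
      have h1 : ((p + s • e).1, (p + s • e).2 + ε) = (p.1, p.2 + ε) + s • e := by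
        ext1
        · simp
        · simp; ring
      have h2 : ((p - s • e).1, (p - s • e).2 + ε) = (p.1, p.2 + ε) - s • e := by
        ext1
        · simp
        · simp; ring
      simp only [sdq, h1, h2]
    simp only [lapS, this]
  unfold HasGLap
  rw [this]; exact h

/-- At a local maximum a generalized Laplacian is nonpositive. -/
lemma HasGLap.nonpos_of_isLocalMax {d : ℕ} {w : Ed d × ℝ → ℝ} {p : Ed d × ℝ} {L : ℝ}
    (h : HasGLap w p L) (hm : ∀ᶠ q in 𝓝 p, w q ≤ w p) : L ≤ 0 := by
  refine le_of_tendsto h ?_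
  have key : ∀ e : Ed d × ℝ, ∀ᶠ s in 𝓝[>] (0 : ℝ), sdq w p e s ≤ 0 := by
    intro e
    have h1 : Tendsto (fun s : ℝ => p + s • e) (𝓝[>] 0) (𝓝 p) := by
      have : Continuous (fun s : ℝ => p + s • e) := by fun_prop
      simpa using (this.tendsto 0).mono_left nhdsWithin_le_nhds
    have h2 : Tendsto (fun s : ℝ => p - s • e) (𝓝[>] 0) (𝓝 p) := by
      have : Continuous (fun s : ℝ => p - s • e) := by fun_prop
      simpa using (this.tendsto 0).mono_left nhdsWithin_le_nhds
    filter_upwards [h1.eventually hm, h2.eventually hm] with s a b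
    exact div_nonpos_of_nonpos_of_nonneg (by linarith) (sq_nonneg s)
  have := eventually_all.2 (fun i : Fin d => key (EuclideanSpace.single i 1, 0))
  filter_upwards [this, key (0, 1)] with s h1 h2
  exact add_nonpos (Finset.sum_nonpos fun i _ => h1 i) h2

/-- Second differences of a function of one variable with bounded second derivative. -/
lemma second_diff_bound {g g' gdd : ℝ → ℝ} {s C : ℝ} (hs : 0 ≤ s)
    (h1 : ∀ τ, |τ| ≤ s → HasDerivAt g (g' τ) τ)
    (h2 : ∀ τ, |τ| ≤ s → HasDerivAt g' (gdd τ) τ)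
    (hC : ∀ τ, |τ| ≤ s → |gdd τ| ≤ C) :
    |g s + g (-s) - 2 * g 0| ≤ 2 * C * s ^ 2 := by
  have hC0 : 0 ≤ C := (abs_nonneg _).trans (hC 0 (by simpa using hs))
  have hd : ∀ τ ∈ Set.Icc 0 s, ‖g' τ - g' (-τ)‖ ≤ 2 * C * s := by
    intro τ hτ
    have hb := (convex_Icc (-s) s).norm_image_sub_le_of_norm_hasDerivWithin_le
      (f := g') (f' := gdd) (C := C)
      (fun x hx => (h2 x (abs_le.2 hx)).hasDerivWithinAt)
      (fun x hx => hC x (abs_le.2 hx))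
      (x := -τ) (y := τ) ⟨by linarith [hτ.2], by linarith [hτ.1]⟩ ⟨by linarith [hτ.1], hτ.2⟩
    refine hb.trans ?_
    rw [Real.norm_eq_abs, abs_of_nonneg (by linarith [hτ.1])]
    nlinarith [hτ.2]
  have := (convex_Icc 0 s).norm_image_sub_le_of_norm_hasDerivWithin_le
      (f := fun τ => g τ + g (-τ)) (f' := fun τ => g' τ - g' (-τ)) (C := 2 * C * s)
      (fun x hx => by
        have a := h1 x (abs_le.2 ⟨by linarith [hx.1], hx.2⟩)
        have b := (h1 (-x) (abs_le.2 ⟨by linarith [hx.2], by linarith [hx.1]⟩)).scomp x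
          (hasDerivAt_neg x)
        have c := a.add b
        exact (c.congr_deriv (by simp; ring)).hasDerivWithinAt)
      hd (x := 0) (y := s) ⟨le_rfl, hs⟩ ⟨hs, le_rfl⟩
  simp only [Real.norm_eq_abs, neg_zero, sub_zero, abs_of_nonneg hs] at this
  calc |g s + g (-s) - 2 * g 0| = |g s + g (-s) - (g 0 + g 0)| := by ring_nf
    _ ≤ _ := this
    _ = _ := by ring

/-- Second difference quotients converge to the second derivative. -/
lemma second_diff_tendsto {g g' : ℝ → ℝ} {L : ℝ}
    (h1 : ∀ᶠ τ in 𝓝 0, HasDerivAt g (g' τ) τ) (h2 : HasDerivAt g' L 0) :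
    Tendsto (fun s => (g s + g (-s) - 2 * g 0) / s ^ 2) (𝓝[>] 0) (𝓝 L) := by
  rw [Metric.tendsto_nhds]
  intro ε hε
  have h3 := h2.isLittleO
  have h4 := h3.def (show 0 < ε / 4 by positivity)
  obtain ⟨δ, hδ, hball⟩ := Metric.eventually_nhds_iff.1 (h1.and h4)
  have : ∀ᶠ s in 𝓝[>] (0 : ℝ), s < δ := by
    filter_upwards [nhdsWithin_le_nhds (Iio_mem_nhds hδ)] with s hs using hs
  filter_upwards [this, self_mem_nhdsWithin] with s hs hs0
  have hs0 : 0 < s := hs0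
  have hb : ∀ τ ∈ Set.Icc 0 s, ‖(g' τ - g' (-τ)) - 2 * L * τ‖ ≤ ε / 2 * s := by
    intro τ hτ
    have a := (hball (y := τ) (by simp [abs_of_nonneg hτ.1]; linarith [hτ.2])).2
    have b := (hball (y := -τ) (by simp [abs_of_nonneg hτ.1]; linarith [hτ.2])).2
    simp only [sub_zero, smul_eq_mul, Real.norm_eq_abs, abs_neg, abs_of_nonneg hτ.1] at a b
    rw [Real.norm_eq_abs]
    rw [abs_le] at *
    have := mul_le_mul_of_nonneg_left hτ.2 hε.le
    constructor <;> linarith [a.1, a.2, b.1, b.2]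
  have := (convex_Icc 0 s).norm_image_sub_le_of_norm_hasDerivWithin_le
      (f := fun τ => g τ + g (-τ) - L * τ ^ 2)
      (f' := fun τ => (g' τ - g' (-τ)) - 2 * L * τ) (C := ε / 2 * s)
      (fun x hx => by
        have a := (hball (y := x) (by simp [abs_of_nonneg hx.1]; linarith [hx.2])).1
        have b := ((hball (y := -x) (by simp [abs_of_nonneg hx.1]; linarith [hx.2])).1).scomp x
          (hasDerivAt_neg x)
        have c := (a.add b).sub (((hasDerivAt_id x).pow 2).const_mul L)
        exact (c.congr_deriv (by simp; ring)).hasDerivWithinAt)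
      hb (x := 0) (y := s) ⟨le_rfl, hs0.le⟩ ⟨hs0.le, le_rfl⟩
  simp only [Real.norm_eq_abs, neg_zero, sub_zero, abs_of_pos hs0] at this
  rw [Real.dist_eq, show (g s + g (-s) - 2 * g 0) / s ^ 2 - L
    = (g s + g (-s) - L * s ^ 2 - (g 0 + g 0 - L * 0 ^ 2)) / s ^ 2 by field_simp; ring,
    abs_div, abs_of_pos (show 0 < s ^ 2 by positivity), div_lt_iff₀ (by positivity)]
  refine this.trans_lt ?_
  nlinarith [mul_pos hε (mul_pos hs0 hs0)]

/-- Generalized Laplacian from second derivatives along the coordinate lines. -/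
lemma hasGLap_of_lines {d : ℕ} {w : Ed d × ℝ → ℝ} {p : Ed d × ℝ}
    {D : Ed d × ℝ → ℝ → ℝ} {D2 : Ed d × ℝ → ℝ}
    (h1 : ∀ e, ∀ᶠ τ in 𝓝 (0 : ℝ), HasDerivAt (fun t : ℝ => w (p + t • e)) (D e τ) τ)
    (h2 : ∀ e, HasDerivAt (D e) (D2 e) 0) :
    HasGLap w p ((∑ i : Fin d, D2 (EuclideanSpace.single i 1, 0)) + D2 (0, 1)) := by
  have key : ∀ e, Tendsto (sdq w p e) (𝓝[>] 0) (𝓝 (D2 e)) := by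
    intro e
    have := second_diff_tendsto (h1 e) (h2 e)
    refine this.congr fun s => ?_
    simp [sdq, sub_eq_add_neg]
  exact (tendsto_finsetSum _ fun i _ => key _).add (key _)

/-! ### The Poisson kernel of the half-space -/

/-- The (unnormalized) Poisson kernel `y (|x|² + y²)^{-(d+1)/2}` of `ℝ^{d+1}₊`. -/
def pk {d : ℕ} (q : Ed d × ℝ) : ℝ :=
  q.2 * (‖q.1‖ ^ 2 + q.2 ^ 2) ^ (-(((d : ℝ) + 1) / 2))

/-- First derivative along a line of a function of the form `y · ρ^{-N}`. -/
lemma line_deriv1 (y η A m k N τ : ℝ) (h : 0 < A + 2 * m * τ + k * τ ^ 2) :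
    HasDerivAt (fun t : ℝ => (y + η * t) * (A + 2 * m * t + k * t ^ 2) ^ (-N))
      (η * (A + 2 * m * τ + k * τ ^ 2) ^ (-N) -
        2 * N * (y + η * τ) * (m + k * τ) * (A + 2 * m * τ + k * τ ^ 2) ^ (-N - 1)) τ := by
  have h1 : HasDerivAt (fun t : ℝ => y + η * t) η τ := by
    simpa using ((hasDerivAt_id τ).const_mul η).const_add y
  have h2 : HasDerivAt (fun t : ℝ => A + 2 * m * t + k * t ^ 2) (2 * (m + k * τ)) τ := by
    have := (((hasDerivAt_id τ).const_mul (2 * m)).const_add A).add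
      (((hasDerivAt_id τ).pow 2).const_mul k)
    exact this.congr_deriv (by simp; ring)
  have h3 := h2.rpow_const (p := -N) (Or.inl h.ne')
  exact (h1.mul h3).congr_deriv (by ring)

/-- Second derivative along a line of a function of the form `y · ρ^{-N}`. -/
lemma line_deriv2 (y η A m k N τ : ℝ) (h : 0 < A + 2 * m * τ + k * τ ^ 2) :
    HasDerivAt (fun t : ℝ => η * (A + 2 * m * t + k * t ^ 2) ^ (-N) -
        2 * N * (y + η * t) * (m + k * t) * (A + 2 * m * t + k * t ^ 2) ^ (-N - 1))
      (-(4 * N * η * (m + k * τ) + 2 * N * k * (y + η * τ)) *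
          (A + 2 * m * τ + k * τ ^ 2) ^ (-N - 1) +
        4 * N * (N + 1) * (y + η * τ) * (m + k * τ) ^ 2 *
          (A + 2 * m * τ + k * τ ^ 2) ^ (-N - 2)) τ := by
  have h1 : HasDerivAt (fun t : ℝ => y + η * t) η τ := by
    simpa using ((hasDerivAt_id τ).const_mul η).const_add y
  have h1' : HasDerivAt (fun t : ℝ => m + k * t) k τ := by
    simpa using ((hasDerivAt_id τ).const_mul k).const_add m
  have h2 : HasDerivAt (fun t : ℝ => A + 2 * m * t + k * t ^ 2) (2 * (m + k * τ)) τ := by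
    have := (((hasDerivAt_id τ).const_mul (2 * m)).const_add A).add
      (((hasDerivAt_id τ).pow 2).const_mul k)
    exact this.congr_deriv (by simp; ring)
  have h3 := h2.rpow_const (p := -N) (Or.inl h.ne')
  have h4 := h2.rpow_const (p := -N - 1) (Or.inl h.ne')
  have h5 := (h3.const_mul η).sub (((h1.const_mul (2 * N)).mul h1').mul h4)
  refine h5.congr_deriv ?_
  rw [show -N - 1 - 1 = -N - 2 by ring]
  simp only [Pi.mul_apply]
  ring

/-- The squared Euclidean length of a vector of `ℝ^d × ℝ`. -/
def sqn {d : ℕ} (q : Ed d × ℝ) : ℝ := ‖q.1‖ ^ 2 + q.2 ^ 2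

lemma sqn_line {d : ℕ} (q e : Ed d × ℝ) (t : ℝ) :
    sqn (q + t • e) = sqn q + 2 * (⟪q.1, e.1⟫ + q.2 * e.2) * t + sqn e * t ^ 2 := by
  simp only [sqn, Prod.fst_add, Prod.smul_fst, Prod.snd_add, Prod.smul_snd, smul_eq_mul]
  rw [norm_add_sq_real, inner_smul_right, norm_smul, Real.norm_eq_abs, mul_pow, sq_abs]
  ring

lemma pk_line {d : ℕ} (q e : Ed d × ℝ) :
    (fun t : ℝ => pk (q + t • e)) = fun t : ℝ => (q.2 + e.2 * t) *
      (sqn q + 2 * (⟪q.1, e.1⟫ + q.2 * e.2) * t + sqn e * t ^ 2) ^ (-(((d : ℝ) + 1) / 2)) := by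
  funext t
  rw [← sqn_line]
  simp only [pk, sqn, Prod.snd_add, Prod.smul_snd, smul_eq_mul]
  ring_nf

lemma sqn_pos {d : ℕ} {q : Ed d × ℝ} (h : 0 < q.2) : 0 < sqn q := by
  unfold sqn; positivity

/-- The Poisson kernel is harmonic. -/
lemma pk_hasGLap {d : ℕ} (q : Ed d × ℝ) (hq : 0 < q.2) : HasGLap pk q 0 := by
  set N : ℝ := ((d : ℝ) + 1) / 2 with hN
  have hpos : ∀ e : Ed d × ℝ, ∀ᶠ τ in 𝓝 (0 : ℝ),
      0 < sqn q + 2 * (⟪q.1, e.1⟫ + q.2 * e.2) * τ + sqn e * τ ^ 2 := by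
    intro e
    have : ContinuousAt (fun τ : ℝ =>
      sqn q + 2 * (⟪q.1, e.1⟫ + q.2 * e.2) * τ + sqn e * τ ^ 2) 0 := by fun_prop
    exact this.eventually (lt_mem_nhds (by simpa using sqn_pos hq))
  have := hasGLap_of_lines (w := pk) (p := q)
    (fun e => (hpos e).mono fun τ hτ => by
      rw [pk_line]
      exact line_deriv1 q.2 e.2 (sqn q) (⟪q.1, e.1⟫ + q.2 * e.2) (sqn e) N τ hτ)
    (fun e => line_deriv2 q.2 e.2 (sqn q) (⟪q.1, e.1⟫ + q.2 * e.2) (sqn e) N 0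
      (by simpa using sqn_pos hq))
  convert this using 1
  have hs := sqn_pos hq
  have e1 : (sqn q) ^ (-N - 1) = sqn q * (sqn q) ^ (-N - 2) := by
    rw [show -N - 1 = 1 + (-N - 2) by ring, Real.rpow_add hs, Real.rpow_one]
  have e2 : sqn q = ∑ i : Fin d, q.1 i ^ 2 + q.2 ^ 2 := by
    simp [sqn, EuclideanSpace.norm_sq_eq]
  have e3 : ∀ i : Fin d, ⟪q.1, EuclideanSpace.single i (1 : ℝ)⟫ = q.1 i := by
    intro i; simp [EuclideanSpace.inner_single_right]
  simp only [mul_zero, add_zero, zero_pow, ne_eq, OfNat.ofNat_ne_zero, not_false_eq_true,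
    zero_add, e3, mul_one, inner_zero_right, zero_mul]
  have e4 : ∀ i : Fin d, sqn ((EuclideanSpace.single i (1 : ℝ), (0 : ℝ)) : Ed d × ℝ) = 1 := by
    intro i; simp [sqn]
  have e5 : sqn ((0, 1) : Ed d × ℝ) = 1 := by simp [sqn]
  simp only [e4, e5, e1, Finset.sum_add_distrib, ← Finset.sum_mul, ← Finset.mul_sum]
  simp only [Finset.sum_const, Finset.card_univ, Fintype.card_fin, nsmul_eq_mul]
  have e6 : ∑ i : Fin d, q.1 i ^ 2 = sqn q - q.2 ^ 2 := by rw [e2]; ring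
  rw [e6]
  rw [show (d : ℝ) = 2 * N - 1 by rw [hN]; ring]
  ring

/-- Bound for the second derivative of the Poisson kernel along a line: the factors `y + η τ` and
`m + τ` coming from differentiation are at most the square root of the quadratic in the
denominator. -/
lemma line_bound {y η A m N δ τ : ℝ} (hN : 0 ≤ N) (hδ : 0 < δ) (hη : |η| ≤ 1)
    (h0 : δ ^ 2 ≤ A + 2 * m * τ + 1 * τ ^ 2)
    (h1 : (y + η * τ) ^ 2 ≤ A + 2 * m * τ + 1 * τ ^ 2)
    (h2 : (m + 1 * τ) ^ 2 ≤ A + 2 * m * τ + 1 * τ ^ 2) :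
    |-(4 * N * η * (m + 1 * τ) + 2 * N * 1 * (y + η * τ)) *
          (A + 2 * m * τ + 1 * τ ^ 2) ^ (-N - 1) +
        4 * N * (N + 1) * (y + η * τ) * (m + 1 * τ) ^ 2 *
          (A + 2 * m * τ + 1 * τ ^ 2) ^ (-N - 2)| ≤
      (6 * N + 4 * N * (N + 1)) * (δ ^ 2) ^ (-N - 1 / 2) := by
  set ρ := A + 2 * m * τ + 1 * τ ^ 2
  set Y := y + η * τ
  set Z := m + 1 * τ
  have hδ2 : 0 < δ ^ 2 := by positivity
  have hρ : 0 < ρ := hδ2.trans_le h0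
  have hY : |Y| ≤ ρ ^ (1 / 2 : ℝ) := by
    rw [← Real.sqrt_eq_rpow]; exact Real.abs_le_sqrt h1
  have hZ : |Z| ≤ ρ ^ (1 / 2 : ℝ) := by
    rw [← Real.sqrt_eq_rpow]; exact Real.abs_le_sqrt h2
  set r := ρ ^ (1 / 2 : ℝ) with hr
  have hr0 : 0 ≤ r := by positivity
  have e1 : ρ ^ (-N - 1 / 2) = r * ρ ^ (-N - 1) := by
    rw [hr, ← Real.rpow_add hρ]; congr 1; ring
  have e2 : ρ ^ (-N - 1) = ρ * ρ ^ (-N - 2) := by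
    rw [show -N - 1 = 1 + (-N - 2) by ring, Real.rpow_add hρ, Real.rpow_one]
  have hmono : ρ ^ (-N - 1 / 2) ≤ (δ ^ 2) ^ (-N - 1 / 2) :=
    Real.rpow_le_rpow_of_nonpos hδ2 h0 (by linarith)
  have hp1 : 0 ≤ ρ ^ (-N - 1) := by positivity
  have hp2 : 0 ≤ ρ ^ (-N - 2) := by positivity
  have b1 : |-(4 * N * η * Z + 2 * N * 1 * Y) * ρ ^ (-N - 1)| ≤ 6 * N * ρ ^ (-N - 1 / 2) := by
    rw [abs_mul, abs_of_nonneg hp1, e1, ← mul_assoc]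
    refine mul_le_mul_of_nonneg_right ?_ hp1
    rw [abs_neg]
    refine (abs_add_le _ _).trans ?_
    rw [abs_mul, abs_mul, abs_mul, abs_mul (2 * N * 1), abs_of_nonneg (show (0 : ℝ) ≤ 4 by norm_num),
      abs_of_nonneg hN, abs_of_nonneg (show 0 ≤ 2 * N * 1 by linarith)]
    have : |η| * |Z| ≤ r := by nlinarith [abs_nonneg η, abs_nonneg Z]
    nlinarith [mul_le_mul_of_nonneg_left this hN, mul_le_mul_of_nonneg_left hY hN]
  have b2 : |4 * N * (N + 1) * Y * Z ^ 2 * ρ ^ (-N - 2)| ≤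
      4 * N * (N + 1) * ρ ^ (-N - 1 / 2) := by
    rw [e1, e2, abs_mul, abs_of_nonneg hp2, abs_mul, abs_mul, abs_of_nonneg (sq_nonneg Z),
      abs_of_nonneg (show 0 ≤ 4 * N * (N + 1) by positivity)]
    have : |Y| * Z ^ 2 ≤ r * ρ := mul_le_mul hY h2 (sq_nonneg _) hr0
    have := mul_le_mul_of_nonneg_left this (show 0 ≤ 4 * N * (N + 1) by positivity)
    have := mul_le_mul_of_nonneg_right this hp2
    linarith
  refine (abs_add_le _ _).trans ((add_le_add b1 b2).trans ?_)
  rw [← add_mul]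
  exact mul_le_mul_of_nonneg_left hmono (by positivity)

/-- Discrete Laplacians of the Poisson kernel are bounded on horizontal hyperplanes, uniformly
in small steps. -/
lemma pk_lapS_bound (d : ℕ) {y : ℝ} (hy : 0 < y) :
    ∃ C : ℝ, ∀ (x : Ed d) (s : ℝ), 0 < s → s ≤ y / 2 → |lapS pk (x, y) s| ≤ C := by
  set N : ℝ := ((d : ℝ) + 1) / 2 with hN
  have hN0 : 0 ≤ N := by positivity
  set B := (6 * N + 4 * N * (N + 1)) * ((y / 2) ^ 2) ^ (-N - 1 / 2)
  have key : ∀ (x : Ed d) (s : ℝ), 0 < s → s ≤ y / 2 → ∀ e : Ed d × ℝ, sqn e = 1 →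
      (∀ τ : ℝ, |τ| ≤ s → (y / 2) ^ 2 ≤ (y + e.2 * τ) ^ 2) →
      |sdq pk (x, y) e s| ≤ 2 * B := by
    intro x s hs hsy e he hτ
    set q : Ed d × ℝ := (x, y)
    have hge : ∀ τ : ℝ, |τ| ≤ s → (q.2 + e.2 * τ) ^ 2 ≤
        sqn q + 2 * (⟪q.1, e.1⟫ + q.2 * e.2) * τ + 1 * τ ^ 2 := by
      intro τ _
      have := sqn_line q e τ
      rw [he] at this
      rw [← this]
      simp only [sqn, Prod.snd_add, Prod.smul_snd, smul_eq_mul]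
      nlinarith [sq_nonneg ‖(q + τ • e).1‖]
    have hge1 : ∀ τ : ℝ, |τ| ≤ s → (y / 2) ^ 2 ≤
        sqn q + 2 * (⟪q.1, e.1⟫ + q.2 * e.2) * τ + 1 * τ ^ 2 :=
      fun τ h => (hτ τ h).trans (hge τ h)
    have hcs : (⟪q.1, e.1⟫ + q.2 * e.2) ^ 2 ≤ sqn q := by
      have h1 : ⟪q.1, e.1⟫ ^ 2 ≤ (‖q.1‖ * ‖e.1‖) ^ 2 := by
        rw [sq_le_sq]
        exact (abs_real_inner_le_norm _ _).trans (le_abs_self _)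
      have h2 : |⟪q.1, e.1⟫ * (q.2 * e.2)| ≤ (‖q.1‖ * ‖e.1‖) * |q.2 * e.2| := by
        rw [abs_mul]
        exact mul_le_mul_of_nonneg_right (abs_real_inner_le_norm _ _) (abs_nonneg _)
      have h3 : sqn q = sqn q * sqn e := by rw [he, mul_one]
      have h5 := le_abs_self (⟪q.1, e.1⟫ * (q.2 * e.2))
      have h4 : (‖q.1‖ * ‖e.1‖) * |q.2 * e.2| = (‖q.1‖ * |e.2|) * (|q.2| * ‖e.1‖) := by
        rw [abs_mul]; ring
      have h6 := sq_nonneg (‖q.1‖ * |e.2| - |q.2| * ‖e.1‖)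
      rw [h3]
      unfold sqn
      have h7 : (‖q.1‖ * |e.2| - |q.2| * ‖e.1‖) ^ 2 =
        ‖q.1‖ ^ 2 * e.2 ^ 2 - 2 * ((‖q.1‖ * |e.2|) * (|q.2| * ‖e.1‖)) + q.2 ^ 2 * ‖e.1‖ ^ 2 := by
        rw [← sq_abs e.2, ← sq_abs q.2]; ring
      nlinarith
    have hge2 : ∀ τ : ℝ, |τ| ≤ s → ((⟪q.1, e.1⟫ + q.2 * e.2) + 1 * τ) ^ 2 ≤
        sqn q + 2 * (⟪q.1, e.1⟫ + q.2 * e.2) * τ + 1 * τ ^ 2 := by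
      intro τ _
      nlinarith
    have hη : |e.2| ≤ 1 := by
      rw [← sq_le_one_iff_abs_le_one]
      unfold sqn at he; nlinarith [sq_nonneg ‖e.1‖]
    have h0 : 0 < (y / 2) ^ 2 := by positivity
    have hb := second_diff_bound (g := fun t : ℝ => pk (q + t • e)) hs.le
      (fun τ h => by
        rw [pk_line, he]
        exact line_deriv1 q.2 e.2 (sqn q) (⟪q.1, e.1⟫ + q.2 * e.2) 1 N τ
          (h0.trans_le (hge1 τ h)))
      (fun τ h => line_deriv2 q.2 e.2 (sqn q) (⟪q.1, e.1⟫ + q.2 * e.2) 1 N τ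
          (h0.trans_le (hge1 τ h)))
      (fun τ h => line_bound hN0 (by positivity) hη (hge1 τ h) (hge τ h) (hge2 τ h))
    unfold sdq
    rw [abs_div, abs_of_pos (show 0 < s ^ 2 by positivity), div_le_iff₀ (by positivity)]
    simp only [neg_smul, zero_smul, add_zero, ← sub_eq_add_neg] at hb
    exact hb
  refine ⟨d * (2 * B) + 2 * B, fun x s hs hsy => ?_⟩
  refine (abs_add_le _ _).trans (add_le_add ?_ ?_)
  · refine (Finset.abs_sum_le_sum_abs _ _).trans ?_
    calc _ ≤ ∑ i : Fin d, 2 * B := Finset.sum_le_sum fun i _ => key x s hs hsy _ (by simp [sqn])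
            (fun τ _ => by simp only [zero_mul, add_zero]; nlinarith)
      _ = _ := by simp
  · refine key x s hs hsy _ (by simp [sqn]) fun τ h => ?_
    have := (abs_le.1 h).1
    simp only [one_mul]
    exact pow_le_pow_left₀ (by positivity) (by linarith) 2

/-! ### Poisson integrals -/

lemma pk_nonneg {d : ℕ} {q : Ed d × ℝ} (h : 0 ≤ q.2) : 0 ≤ pk q := by
  unfold pk; positivity

lemma pk_pos {d : ℕ} {q : Ed d × ℝ} (h : 0 < q.2) : 0 < pk q := by
  unfold pk; positivity

lemma pk_continuousAt {d : ℕ} {q : Ed d × ℝ} (h : 0 < q.2) : ContinuousAt pk q := by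
  have h1 : 0 < ‖q.1‖ ^ 2 + q.2 ^ 2 := by positivity
  unfold pk
  refine ContinuousAt.mul (by fun_prop) (ContinuousAt.rpow_const (by fun_prop) (Or.inl h1.ne'))

lemma pk_slice_continuous {d : ℕ} (x : Ed d) {y : ℝ} (hy : 0 < y) :
    Continuous fun t : Ed d => pk (x - t, y) := by
  refine continuous_iff_continuousAt.2 fun t => ?_
  exact ContinuousAt.comp (g := pk) (f := fun t : Ed d => (x - t, y))
    (pk_continuousAt hy) (by fun_prop)

/-- At distance at least `r` from the origin, `pk (x,y) ≤ y r^{-(d+1)}`. -/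
lemma pk_le {d : ℕ} {x : Ed d} {y r : ℝ} (hr : 0 < r) (hy : 0 < y)
    (h : r ^ 2 ≤ ‖x‖ ^ 2 + y ^ 2) : pk (x, y) ≤ y * (r ^ (d + 1))⁻¹ := by
  unfold pk
  refine mul_le_mul_of_nonneg_left ?_ hy.le
  refine (Real.rpow_le_rpow_of_nonpos (by positivity) h (by
    rw [neg_nonpos]; positivity)).trans (le_of_eq ?_)
  rw [Real.rpow_neg (by positivity), ← Real.rpow_natCast r 2, ← Real.rpow_mul hr.le,
    ← Real.rpow_natCast]
  congr 2
  push_cast; ring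

lemma pk_le_inv {d : ℕ} {x : Ed d} {y δ : ℝ} (hδ : 0 < δ) (hy : δ ≤ y) :
    pk (x, y) ≤ (δ ^ d)⁻¹ := by
  have hy0 : 0 < y := hδ.trans_le hy
  refine (pk_le hy0 hy0 (by nlinarith [sq_nonneg ‖x‖])).trans ?_
  rw [pow_succ, mul_inv, mul_comm _ y⁻¹, ← mul_assoc, mul_inv_cancel₀ hy0.ne', one_mul]
  exact inv_anti₀ (by positivity) (pow_le_pow_left₀ hδ.le hy d)

lemma pk_scale {d : ℕ} (x : Ed d) {y : ℝ} (hy : 0 < y) :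
    pk (y • x, y) = (y ^ d)⁻¹ * pk (x, 1) := by
  unfold pk
  simp only [norm_smul, Real.norm_eq_abs, abs_of_pos hy]
  rw [show (y * ‖x‖) ^ 2 + y ^ 2 = y ^ 2 * (‖x‖ ^ 2 + 1 ^ 2) by ring,
    Real.mul_rpow (by positivity) (by positivity), Real.rpow_neg (by positivity),
    ← Real.rpow_natCast y 2, ← Real.rpow_mul hy.le,
    show ((2 : ℕ) : ℝ) * (((d : ℝ) + 1) / 2) = ((d + 1 : ℕ) : ℝ) by push_cast; ring,
    Real.rpow_natCast, pow_succ, mul_inv]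
  field_simp

lemma pk_integrable_one (d : ℕ) : Integrable fun x : Ed d => pk (x, 1) := by
  have := integrable_rpow_neg_one_add_norm_sq (E := Ed d) (μ := volume) (r := (d : ℝ) + 1)
    (by simp)
  refine this.congr (Eventually.of_forall fun x => ?_)
  simp only [pk, one_mul, one_pow]
  rw [add_comm, neg_div]

/-- The total mass of the unnormalized Poisson kernel. -/
def pkMass (d : ℕ) : ℝ := ∫ x : Ed d, pk (x, 1)

lemma pkMass_pos (d : ℕ) : 0 < pkMass d := by
  refine (integral_pos_iff_support_of_nonneg (fun x => pk_nonneg zero_le_one)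
    (pk_integrable_one d)).2 ?_
  have : Function.support (fun x : Ed d => pk (x, 1)) = Set.univ := by
    ext x; simp [(pk_pos (q := (x, (1 : ℝ))) one_pos).ne']
  rw [this]
  simp [NeZero.ne]

/-- The (unnormalized) Poisson integral of `f`. -/
def poisson {d : ℕ} (f : Ed d → ℝ) (q : Ed d × ℝ) : ℝ := ∫ t, pk (q.1 - t, q.2) * f t

/-- Change of variables `t = x - y s` in the Poisson integral. -/
lemma poisson_eq {d : ℕ} (f : Ed d → ℝ) (x : Ed d) {y : ℝ} (hy : 0 < y) :
    poisson f (x, y) = ∫ s, pk (s, 1) * f (x - y • s) := by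
  have h1 : ∫ s, pk (s, 1) * f (x - y • s) =
      ∫ s, (fun z => y ^ d * (pk (z, y) * f (x - z))) (y • s) := by
    congr 1; funext s
    simp only
    rw [pk_scale s hy]
    field_simp
  rw [h1, Measure.integral_comp_smul volume (fun z => y ^ d * (pk (z, y) * f (x - z))) y,
    integral_const_mul]
  simp only [poisson, finrank_euclideanSpace, Fintype.card_fin, smul_eq_mul]
  rw [abs_of_pos (by positivity), ← mul_assoc, inv_mul_cancel₀ (by positivity), one_mul]
  rw [← integral_sub_left_eq_self (fun z => pk (z, y) * f (x - z)) volume x]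
  simp

lemma pk_slice_integrable {d : ℕ} (x : Ed d) {y : ℝ} (hy : 0 < y) :
    Integrable fun t : Ed d => pk (x - t, y) := by
  have h1 : Integrable fun z : Ed d => pk (z, y) := by
    rw [← integrable_comp_smul_iff volume _ hy.ne']
    simp_rw [pk_scale _ hy]
    exact (pk_integrable_one d).const_mul _
  exact h1.comp_sub_left x

lemma poisson_one {d : ℕ} (x : Ed d) {y : ℝ} (hy : 0 < y) :
    ∫ t, pk (x - t, y) = pkMass d := by
  have := poisson_eq (fun _ => 1) x hy
  simpa [poisson, pkMass] using this

lemma pk_mul_integrable {d : ℕ} {f : Ed d → ℝ} (hf : Integrable f) (x : Ed d) {y : ℝ}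
    (hy : 0 < y) : Integrable fun t => pk (x - t, y) * f t := by
  refine hf.bdd_mul (c := (y ^ d)⁻¹) (pk_slice_continuous x hy).aestronglyMeasurable
    (Eventually.of_forall fun t => ?_)
  rw [Real.norm_eq_abs, abs_of_nonneg (pk_nonneg hy.le)]
  exact pk_le_inv hy le_rfl

lemma poisson_continuousAt {d : ℕ} {f : Ed d → ℝ} (hf : Integrable f) {q : Ed d × ℝ}
    (hq : 0 < q.2) : ContinuousAt (poisson f) q := by
  have hev : ∀ᶠ p : Ed d × ℝ in 𝓝 q, q.2 / 2 < p.2 :=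
    continuousAt_snd.eventually (lt_mem_nhds (by linarith))
  refine continuousAt_of_dominated (bound := fun t => ((q.2 / 2) ^ d)⁻¹ * ‖f t‖) ?_ ?_ ?_ ?_
  · filter_upwards [hev] with p hp
    exact (pk_mul_integrable hf p.1 (by linarith)).aestronglyMeasurable
  · filter_upwards [hev] with p hp
    refine Eventually.of_forall fun t => ?_
    rw [norm_mul]
    refine mul_le_mul_of_nonneg_right ?_ (norm_nonneg _)
    rw [Real.norm_eq_abs, abs_of_nonneg (pk_nonneg (by simp only; linarith))]
    exact pk_le_inv (by linarith) hp.le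
  · exact hf.norm.const_mul _
  · refine Eventually.of_forall fun t => ContinuousAt.mul ?_ continuousAt_const
    exact ContinuousAt.comp (g := pk) (f := fun p : Ed d × ℝ => (p.1 - t, p.2))
      (pk_continuousAt hq) (by fun_prop)

/-- Poisson integrals are harmonic: discrete Laplacians pass under the integral sign. -/
lemma poisson_hasGLap {d : ℕ} {f : Ed d → ℝ} (hf : Integrable f) {q : Ed d × ℝ}
    (hq : 0 < q.2) : HasGLap (poisson f) q 0 := by
  obtain ⟨C, hC⟩ := pk_lapS_bound d hq
  have hsmall : ∀ᶠ s in 𝓝[>] (0 : ℝ), 0 < s ∧ s ≤ q.2 / 2 := by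
    filter_upwards [self_mem_nhdsWithin,
      nhdsWithin_le_nhds (Iic_mem_nhds (show 0 < q.2 / 2 by linarith))] with s h1 h2
    exact ⟨h1, h2⟩
  have hinteg : ∀ p : Ed d × ℝ, 0 < p.2 → Integrable fun t => pk (p.1 - t, p.2) * f t :=
    fun p hp => pk_mul_integrable hf p.1 hp
  have hsdq : ∀ (e : Ed d × ℝ) (s : ℝ), 0 < (q + s • e).2 → 0 < (q - s • e).2 →
      sdq (poisson f) q e s = ∫ t, sdq pk (q.1 - t, q.2) e s * f t ∧
      Integrable fun t => sdq pk (q.1 - t, q.2) e s * f t := by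
    intro e s h1 h2
    have i1 := hinteg _ h1
    have i2 := hinteg _ h2
    have i3 := (hinteg _ hq).const_mul 2
    have i12 : Integrable fun t => pk ((q + s • e).1 - t, (q + s • e).2) * f t +
        pk ((q - s • e).1 - t, (q - s • e).2) * f t := i1.add i2
    have e0 : (fun t => sdq pk (q.1 - t, q.2) e s * f t) = fun t =>
        (pk ((q + s • e).1 - t, (q + s • e).2) * f t +
          pk ((q - s • e).1 - t, (q - s • e).2) * f t -
          2 * (pk (q.1 - t, q.2) * f t)) / s ^ 2 := by
      funext t
      have a1 : ((q.1 - t, q.2) : Ed d × ℝ) + s • e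
          = ((q + s • e).1 - t, (q + s • e).2) := by
        ext1
        · simp; abel
        · simp
      have a2 : ((q.1 - t, q.2) : Ed d × ℝ) - s • e
          = ((q - s • e).1 - t, (q - s • e).2) := by
        ext1
        · simp; abel
        · simp
      simp only [sdq, a1, a2]
      ring
    rw [e0]
    refine ⟨?_, (i12.sub i3).div_const _⟩
    rw [integral_div, integral_sub i12 i3, integral_add i1 i2, integral_const_mul]
    simp only [sdq, poisson]
  have hlap : ∀ᶠ s in 𝓝[>] (0 : ℝ), ∫ t, lapS pk (q.1 - t, q.2) s * f t =
      lapS (poisson f) q s := by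
    filter_upwards [hsmall] with s hs
    have hx : ∀ i : Fin d, _ := fun i => hsdq (EuclideanSpace.single i 1, 0) s
      (by simpa using hq) (by simpa using hq)
    have hyy := hsdq (0, 1) s (by simp; linarith) (by simp; linarith)
    simp only [lapS, add_mul, Finset.sum_mul]
    rw [integral_add (integrable_finsetSum _ fun i _ => (hx i).2) hyy.2,
      integral_finsetSum _ fun i _ => (hx i).2, ← hyy.1]
    congr 1
    exact Finset.sum_congr rfl fun i _ => ((hx i).1).symm
  have hlim : Tendsto (fun s => ∫ t, lapS pk (q.1 - t, q.2) s * f t) (𝓝[>] 0)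
      (𝓝 (∫ t : Ed d, (0 : ℝ) * f t)) := by
    refine tendsto_integral_filter_of_dominated_convergence (fun t => C * ‖f t‖) ?_ ?_ ?_ ?_
    · filter_upwards [hsmall] with s hs
      have hx : ∀ i : Fin d, _ := fun i => hsdq (EuclideanSpace.single i 1, 0) s
        (by simpa using hq) (by simpa using hq)
      have hyy := hsdq (0, 1) s (by simp; linarith) (by simp; linarith)
      simp only [lapS, add_mul, Finset.sum_mul]
      exact ((integrable_finsetSum _ fun i _ => (hx i).2).add hyy.2).aestronglyMeasurable
    · filter_upwards [hsmall] with s hs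
      refine Eventually.of_forall fun t => ?_
      rw [norm_mul]
      exact mul_le_mul_of_nonneg_right (hC _ s hs.1 hs.2) (norm_nonneg _)
    · exact hf.norm.const_mul _
    · exact Eventually.of_forall fun t => (pk_hasGLap (q.1 - t, q.2) hq).mul_const _
  simp only [zero_mul, integral_zero] at hlim
  exact hlim.congr' hlap

/-- A Poisson integral of a nonnegative function is bounded below at `(x,y)` if the function is
at least `1` on the ball of radius `b y` about `x`. -/
lemma poisson_lower (d : ℕ) {b : ℝ} (hb : 0 < b) : ∃ c > 0, ∀ (f : Ed d → ℝ), Integrable f →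
    (∀ t, 0 ≤ f t) → ∀ (x : Ed d) (y : ℝ), 0 < y → (∀ t ∈ ball x (b * y), 1 ≤ f t) →
    c ≤ poisson f (x, y) := by
  refine ⟨∫ s in ball (0 : Ed d) b, pk (s, 1), ?_, ?_⟩
  · refine (setIntegral_pos_iff_support_of_nonneg_ae
      (Eventually.of_forall fun x => pk_nonneg zero_le_one)
      (pk_integrable_one d).integrableOn).2 ?_
    have : Function.support (fun x : Ed d => pk (x, 1)) = Set.univ := by
      ext x; simp [(pk_pos (q := (x, (1 : ℝ))) one_pos).ne']
    rw [this, Set.univ_inter]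
    exact measure_ball_pos _ _ hb
  · intro f hf h0 x y hy h1
    have e : ∫ s in ball (0 : Ed d) b, pk (s, 1) =
        poisson ((ball x (b * y)).indicator fun _ => 1) (x, y) := by
      rw [poisson_eq _ _ hy, ← integral_indicator measurableSet_ball]
      congr 1; funext s
      have : s ∈ ball (0 : Ed d) b ↔ x - y • s ∈ ball x (b * y) := by
        simp only [mem_ball, dist_eq_norm, sub_zero, sub_sub_cancel_left, norm_neg,
          norm_smul, Real.norm_eq_abs, abs_of_pos hy]
        rw [mul_comm b y, mul_lt_mul_iff_right₀ hy]
      by_cases hs : s ∈ ball (0 : Ed d) b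
      · rw [Set.indicator_of_mem hs, Set.indicator_of_mem (this.1 hs), mul_one]
      · rw [Set.indicator_of_notMem hs, Set.indicator_of_notMem (mt this.2 hs), mul_zero]
    rw [e]
    refine integral_mono (pk_mul_integrable ?_ x hy) (pk_mul_integrable hf x hy) fun t => ?_
    · rw [integrable_indicator_iff measurableSet_ball]
      exact integrableOn_const (measure_ball_lt_top.ne)
    · refine mul_le_mul_of_nonneg_left ?_ (pk_nonneg hy.le)
      by_cases ht : t ∈ ball x (b * y)
      · rw [Set.indicator_of_mem ht]; exact h1 t ht
      · rw [Set.indicator_of_notMem ht]; exact h0 t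

/-! ### Non-tangential convergence of Poisson integrals -/

/-- Values of the Poisson kernel at points of a cone are comparable with those on its axis. -/
lemma pk_cone_le (d : ℕ) (A : ℝ) : ∃ C ≥ (0 : ℝ), ∀ (x z s : Ed d) (y : ℝ), 0 < y →
    dist z x < A * y → pk (z - s, y) ≤ C * pk (x - s, y) := by
  set N : ℝ := ((d : ℝ) + 1) / 2 with hN
  refine ⟨(2 + 2 * A ^ 2) ^ N, by positivity, fun x z s y hy hd => ?_⟩
  have hA : (0 : ℝ) < 2 + 2 * A ^ 2 := by positivity
  have h1 : ‖x - s‖ ≤ ‖z - s‖ + A * y := by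
    have := norm_sub_le (z - s) (z - x)
    rw [sub_sub_sub_cancel_left] at this
    rw [dist_eq_norm] at hd
    linarith
  have h2 : ‖x - s‖ ^ 2 + y ^ 2 ≤ (2 + 2 * A ^ 2) * (‖z - s‖ ^ 2 + y ^ 2) := by
    have := pow_le_pow_left₀ (norm_nonneg _) h1 2
    nlinarith [sq_nonneg (‖z - s‖ - A * y), sq_nonneg (A * ‖z - s‖), sq_nonneg ‖z - s‖,
      sq_nonneg y]
  have h3 : (‖z - s‖ ^ 2 + y ^ 2) ^ (-N) ≤
      (2 + 2 * A ^ 2) ^ N * (‖x - s‖ ^ 2 + y ^ 2) ^ (-N) := by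
    have := Real.rpow_le_rpow_of_nonpos (z := -N) (by positivity) h2
      (by rw [neg_nonpos]; positivity)
    rw [Real.mul_rpow hA.le (by positivity), Real.rpow_neg hA.le] at this
    calc _ = (2 + 2 * A ^ 2) ^ N *
          (((2 + 2 * A ^ 2) ^ N)⁻¹ * (‖z - s‖ ^ 2 + y ^ 2) ^ (-N)) := by
          rw [← mul_assoc, mul_inv_cancel₀ (by positivity), one_mul]
      _ ≤ _ := mul_le_mul_of_nonneg_left this (by positivity)
  unfold pk
  calc _ ≤ y * ((2 + 2 * A ^ 2) ^ N * (‖x - s‖ ^ 2 + y ^ 2) ^ (-N)) :=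
        mul_le_mul_of_nonneg_left h3 hy.le
    _ = _ := by ring

/-- Dyadic domination of the Poisson kernel by normalized indicators of balls. -/
lemma pk_dyadic {d : ℕ} {y : ℝ} (hy : 0 < y) (n : ℕ) (z : Ed d) (hz : ‖z‖ ≤ 2 ^ n * y) :
    pk (z, y) ≤ 2 ^ (d + 1) * ∑ k ∈ Finset.range (n + 1),
      (1 / 2) ^ k * (((2 ^ k * y) ^ d)⁻¹ * if ‖z‖ ≤ 2 ^ k * y then 1 else 0) := by
  induction n with
  | zero =>
    simp only [pow_zero, one_mul] at hz
    simp only [zero_add, Finset.range_one, Finset.sum_singleton, pow_zero, one_mul, hz, if_true,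
      mul_one]
    have h1 := pk_le_inv (x := z) hy le_rfl
    have h2 : (1 : ℝ) ≤ 2 ^ (d + 1) := one_le_pow₀ (by norm_num)
    have h3 : 0 ≤ (y ^ d)⁻¹ := by positivity
    nlinarith
  | succ n ih =>
    have hnn : ∀ k : ℕ, (0 : ℝ) ≤
        (1 / 2) ^ k * (((2 ^ k * y) ^ d)⁻¹ * if ‖z‖ ≤ 2 ^ k * y then 1 else 0) := by
      intro k
      split_ifs <;> positivity
    rw [Finset.sum_range_succ, mul_add]
    by_cases h : ‖z‖ ≤ 2 ^ n * y
    · have := ih h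
      have := mul_nonneg (show (0 : ℝ) ≤ 2 ^ (d + 1) by positivity) (hnn (n + 1))
      linarith
    · push Not at h
      have h0 := mul_nonneg (show (0 : ℝ) ≤ 2 ^ (d + 1) by positivity)
        (Finset.sum_nonneg fun k (_ : k ∈ Finset.range (n + 1)) => hnn k)
      refine le_trans ?_ (le_add_of_nonneg_left h0)
      rw [if_pos hz]
      have hr : 0 < 2 ^ n * y := by positivity
      refine (pk_le hr hy (by nlinarith [sq_nonneg y])).trans (le_of_eq ?_)
      rw [pow_succ (2 : ℝ) n, mul_pow, mul_pow, mul_pow, pow_succ (2 : ℝ) d, pow_succ (1 / 2 : ℝ) n,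
        pow_succ (2 ^ n : ℝ) d, pow_succ y d, one_div, inv_pow]
      have : (2 : ℝ) ^ n ≠ 0 := by positivity
      field_simp

/-- Kernel averages are dominated by weighted averages over dyadic balls. -/
lemma poisson_le_dyadic {d : ℕ} {g : Ed d → ℝ} (hg0 : ∀ s, 0 ≤ g s) (hg : LocallyIntegrable g)
    (x : Ed d) {y : ℝ} (hy : 0 < y) (hinteg : Integrable fun s => pk (x - s, y) * g s)
    (hsum : Summable fun k : ℕ => (1 / 2 : ℝ) ^ k *
      (((2 ^ k * y) ^ d)⁻¹ * ∫ s in closedBall x (2 ^ k * y), g s)) :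
    poisson g (x, y) ≤ 2 ^ (d + 1) * ∑' k : ℕ, (1 / 2 : ℝ) ^ k *
      (((2 ^ k * y) ^ d)⁻¹ * ∫ s in closedBall x (2 ^ k * y), g s) := by
  have hU : (⋃ n : ℕ, closedBall x (2 ^ n * y)) = Set.univ := by
    refine Set.eq_univ_of_forall fun s => Set.mem_iUnion.2 ?_
    obtain ⟨n, hn⟩ := pow_unbounded_of_one_lt (dist s x / y) (one_lt_two (α := ℝ))
    exact ⟨n, by rw [mem_closedBall]; exact ((div_lt_iff₀ hy).1 hn).le⟩
  have hmono : Monotone fun n : ℕ => closedBall x ((2 : ℝ) ^ n * y) := by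
    intro m n h
    exact closedBall_subset_closedBall
      (mul_le_mul_of_nonneg_right (pow_le_pow_right₀ one_le_two h) hy.le)
  have hlim := tendsto_setIntegral_of_monotone (μ := volume)
    (f := fun s => pk (x - s, y) * g s) (fun n => measurableSet_closedBall) hmono
    hinteg.integrableOn
  rw [hU, setIntegral_univ] at hlim
  refine le_of_tendsto hlim (Eventually.of_forall fun n => ?_)
  have hi : ∀ r : ℝ, IntegrableOn g (closedBall x r) := fun r =>
    hg.integrableOn_isCompact (isCompact_closedBall x r)
  have hi2 : ∀ k : ℕ, Integrable ((closedBall x ((2 : ℝ) ^ k * y)).indicator g) := fun k =>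
    (integrable_indicator_iff measurableSet_closedBall).2 (hi _)
  have hi3 : Integrable fun s => 2 ^ (d + 1) * ∑ k ∈ Finset.range (n + 1),
      (1 / 2 : ℝ) ^ k * (((2 ^ k * y) ^ d)⁻¹ *
        (closedBall x ((2 : ℝ) ^ k * y)).indicator g s) :=
    (integrable_finsetSum _ fun k _ => ((hi2 k).const_mul _).const_mul _).const_mul _
  calc ∫ s in closedBall x (2 ^ n * y), pk (x - s, y) * g s
      ≤ ∫ s, 2 ^ (d + 1) * ∑ k ∈ Finset.range (n + 1),
        (1 / 2 : ℝ) ^ k * (((2 ^ k * y) ^ d)⁻¹ *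
          (closedBall x ((2 : ℝ) ^ k * y)).indicator g s) := by
        rw [← integral_indicator measurableSet_closedBall]
        refine integral_mono (hinteg.indicator measurableSet_closedBall) hi3 fun s => ?_
        have hpos : ∀ k : ℕ, 0 ≤ (closedBall x ((2 : ℝ) ^ k * y)).indicator g s :=
          fun k => Set.indicator_nonneg (fun s _ => hg0 s) s
        by_cases hs : s ∈ closedBall x (2 ^ n * y)
        · rw [Set.indicator_of_mem hs]
          have hs' : ‖x - s‖ ≤ 2 ^ n * y := by
            rwa [mem_closedBall, dist_comm, dist_eq_norm] at hs
          refine (mul_le_mul_of_nonneg_right (pk_dyadic hy n _ hs') (hg0 s)).trans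
            (le_of_eq ?_)
          rw [mul_assoc, Finset.sum_mul]
          congr 1
          refine Finset.sum_congr rfl fun k _ => ?_
          have : s ∈ closedBall x (2 ^ k * y) ↔ ‖x - s‖ ≤ 2 ^ k * y := by
            rw [mem_closedBall, dist_comm, dist_eq_norm]
          by_cases hk : ‖x - s‖ ≤ 2 ^ k * y
          · rw [if_pos hk, Set.indicator_of_mem (this.2 hk)]; ring
          · rw [if_neg hk, Set.indicator_of_notMem (mt this.1 hk)]; ring
        · rw [Set.indicator_of_notMem hs]
          refine mul_nonneg (by positivity) (Finset.sum_nonneg fun k _ => ?_)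
          have := hpos k
          positivity
    _ = 2 ^ (d + 1) * ∑ k ∈ Finset.range (n + 1), (1 / 2 : ℝ) ^ k *
      (((2 ^ k * y) ^ d)⁻¹ * ∫ s in closedBall x (2 ^ k * y), g s) := by
        rw [integral_const_mul, integral_finsetSum _ fun k _ =>
          ((hi2 k).const_mul _).const_mul _]
        congr 1
        refine Finset.sum_congr rfl fun k _ => ?_
        rw [integral_const_mul, integral_const_mul, integral_indicator measurableSet_closedBall]
    _ ≤ _ := by
        refine mul_le_mul_of_nonneg_left (hsum.sum_le_tsum _ fun k _ => ?_) (by positivity)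
        have : 0 ≤ ∫ s in closedBall x (2 ^ k * y), g s :=
          integral_nonneg fun s => hg0 s
        positivity

/-- **Fatou's theorem** for Poisson integrals of integrable functions: almost everywhere the
non-tangential limit, in cones of every aperture, is the boundary function. -/
lemma poisson_fatou {d : ℕ} {f : Ed d → ℝ} (hf : Integrable f) :
    ∀ᵐ x : Ed d, ∀ A : ℝ,
      Tendsto (poisson f) (𝓝[cone A x] (x, (0 : ℝ))) (𝓝 (pkMass d * f x)) := by
  have hleb := IsUnifLocDoublingMeasure.ae_tendsto_average_norm_sub (μ := (volume : Measure (Ed d)))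
    hf.locallyIntegrable 0
  filter_upwards [hleb] with x hx A
  obtain ⟨C, hC0, hC⟩ := pk_cone_le d A
  set V : ℝ := (volume : Measure (Ed d)).real (ball 0 1) with hV
  have hV0 : 0 < V := by
    rw [hV, measureReal_def]
    exact ENNReal.toReal_pos (measure_ball_pos _ _ one_pos).ne' measure_ball_lt_top.ne
  have hvol : ∀ r : ℝ, 0 ≤ r → (volume : Measure (Ed d)).real (closedBall x r) = r ^ d * V := by
    intro r hr
    rw [measureReal_def, Measure.addHaar_closedBall _ _ hr, ENNReal.toReal_mul,
      ENNReal.toReal_ofReal (by positivity)]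
    simp [hV, measureReal_def]
  set g : Ed d → ℝ := fun s => ‖f s - f x‖ with hg
  have hg0 : ∀ s, 0 ≤ g s := fun s => norm_nonneg _
  have hgl : LocallyIntegrable g :=
    fun z => (hf.locallyIntegrable.sub (locallyIntegrable_const (f x)) z).norm
  have hgi : ∀ r : ℝ, IntegrableOn g (closedBall x r) := fun r =>
    hgl.integrableOn_isCompact (isCompact_closedBall x r)
  -- `m r` is, up to the factor `V`, the average of `g` over the ball of radius `r`
  set m : ℝ → ℝ := fun r => (r ^ d)⁻¹ * ∫ s in closedBall x r, g s with hm
  have hm0 : ∀ r, 0 < r → 0 ≤ m r := fun r hr => by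
    have : 0 ≤ ∫ s in closedBall x r, g s := integral_nonneg fun s => hg0 s
    simp only [hm]; positivity
  have hmlim : Tendsto m (𝓝[>] 0) (𝓝 0) := by
    have h1 := hx (ι := ℝ) (l := 𝓝[>] 0) (fun _ => x) id tendsto_id
      (Eventually.of_forall fun r => by simp)
    have h2 := h1.const_mul V
    rw [mul_zero] at h2
    refine h2.congr' ?_
    filter_upwards [self_mem_nhdsWithin] with r hr
    have hr : 0 < r := hr
    simp only [id, setAverage_eq, smul_eq_mul, hm, hvol r hr.le, mul_inv]
    field_simp
  obtain ⟨B, hB⟩ : ∃ B, ∀ r, 0 < r → m r ≤ B := by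
    have h1 : ∀ᶠ r in 𝓝[>] (0 : ℝ), m r < 1 := hmlim.eventually (gt_mem_nhds one_pos)
    obtain ⟨δ, hδ, h2⟩ := (mem_nhdsGT_iff_exists_Ioo_subset).1 h1
    have hδ : 0 < δ := hδ
    refine ⟨max 1 ((δ ^ d)⁻¹ * (∫ s, ‖f s‖) + ‖f x‖ * V), fun r hr => ?_⟩
    rcases lt_or_ge r δ with h | h
    · exact (h2 ⟨hr, h⟩ : m r < 1).le.trans (le_max_left _ _)
    · refine le_trans ?_ (le_max_right _ _)
      have h3 : ∫ s in closedBall x r, g s ≤ (∫ s, ‖f s‖) + ‖f x‖ * (r ^ d * V) := by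
        calc ∫ s in closedBall x r, g s ≤ ∫ s in closedBall x r, (‖f s‖ + ‖f x‖) := by
              refine integral_mono (hgi r) (hf.norm.integrableOn.add
                (integrableOn_const measure_closedBall_lt_top.ne)) fun s => norm_sub_le _ _
          _ = (∫ s in closedBall x r, ‖f s‖) + ‖f x‖ * (r ^ d * V) := by
              rw [integral_add hf.norm.integrableOn
                (integrableOn_const measure_closedBall_lt_top.ne), setIntegral_const,
                hvol r hr.le, smul_eq_mul, mul_comm ‖f x‖]
          _ ≤ _ := by
              refine add_le_add (setIntegral_le_integral hf.norm
                (Eventually.of_forall fun s => norm_nonneg _)) le_rfl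
      calc m r ≤ (r ^ d)⁻¹ * ((∫ s, ‖f s‖) + ‖f x‖ * (r ^ d * V)) :=
            mul_le_mul_of_nonneg_left h3 (by positivity)
        _ = (r ^ d)⁻¹ * (∫ s, ‖f s‖) + ‖f x‖ * V := by
            have : r ^ d ≠ 0 := by positivity
            field_simp
        _ ≤ _ := by
            have : (0 : ℝ) ≤ ∫ s, ‖f s‖ := integral_nonneg fun s => norm_nonneg _
            gcongr
  set S : ℝ → ℝ := fun y => ∑' k : ℕ, (1 / 2 : ℝ) ^ k * m (2 ^ k * y) with hS
  have hgeo : Summable fun k : ℕ => (1 / 2 : ℝ) ^ k * B :=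
    (summable_geometric_of_lt_one (by norm_num) (by norm_num)).mul_right B
  have hbd : ∀ y, 0 < y → ∀ k : ℕ, ‖(1 / 2 : ℝ) ^ k * m (2 ^ k * y)‖ ≤ (1 / 2 : ℝ) ^ k * B := by
    intro y hy k
    have h := hm0 (2 ^ k * y) (by positivity)
    rw [Real.norm_eq_abs, abs_of_nonneg (by positivity)]
    exact mul_le_mul_of_nonneg_left (hB _ (by positivity)) (by positivity)
  have hSlim : Tendsto S (𝓝[>] 0) (𝓝 0) := by
    have := tendsto_tsum_of_dominated_convergence (𝓕 := 𝓝[>] (0 : ℝ))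
      (f := fun y k => (1 / 2 : ℝ) ^ k * m (2 ^ k * y)) (g := fun _ : ℕ => (0 : ℝ)) hgeo
      (fun k => by
        have h1 : Tendsto (fun y : ℝ => 2 ^ k * y) (𝓝[>] 0) (𝓝[>] 0) := by
          refine tendsto_nhdsWithin_iff.2 ⟨?_, ?_⟩
          · have : Continuous fun y : ℝ => 2 ^ k * y := by fun_prop
            simpa using (this.tendsto 0).mono_left nhdsWithin_le_nhds
          · filter_upwards [self_mem_nhdsWithin] with y hy
            have hy : 0 < y := hy
            exact Set.mem_Ioi.2 (by positivity)
        simpa using (hmlim.comp h1).const_mul ((1 / 2 : ℝ) ^ k))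
      (by
        filter_upwards [self_mem_nhdsWithin] with y hy k
        exact hbd y hy k)
    rw [tsum_zero] at this
    exact this
  have hsnd : Tendsto (fun p : Ed d × ℝ => p.2) (𝓝[cone A x] (x, (0 : ℝ))) (𝓝[>] 0) := by
    refine tendsto_nhdsWithin_iff.2 ⟨?_, ?_⟩
    · exact (continuous_snd.tendsto (x, (0 : ℝ))).mono_left nhdsWithin_le_nhds
    · filter_upwards [self_mem_nhdsWithin] with p hp using hp.1
  rw [tendsto_iff_norm_sub_tendsto_zero]
  have hfin : Tendsto (fun p : Ed d × ℝ => C * (2 ^ (d + 1) * S p.2))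
      (𝓝[cone A x] (x, (0 : ℝ))) (𝓝 0) := by
    simpa using ((hSlim.comp hsnd).const_mul ((2 : ℝ) ^ (d + 1))).const_mul C
  refine squeeze_zero' (Eventually.of_forall fun p => norm_nonneg _) ?_ hfin
  filter_upwards [self_mem_nhdsWithin] with p hp
  obtain ⟨hp0, hpA⟩ := hp
  have hgint : ∀ z : Ed d, Integrable fun s => pk (z - s, p.2) * g s := by
    intro z
    have h1 : Integrable fun s => pk (z - s, p.2) * (f s - f x) := by
      simp_rw [mul_sub]
      exact (pk_mul_integrable hf z hp0).sub ((pk_slice_integrable z hp0).mul_const _)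
    refine h1.norm.congr (Eventually.of_forall fun s => ?_)
    simp only [norm_mul, hg]
    rw [Real.norm_of_nonneg (pk_nonneg (q := (z - s, p.2)) hp0.le)]
  have e1 : poisson f p - pkMass d * f x = ∫ s, pk (p.1 - s, p.2) * (f s - f x) := by
    simp_rw [mul_sub]
    rw [integral_sub (pk_mul_integrable hf p.1 hp0) ((pk_slice_integrable p.1 hp0).mul_const _),
      integral_mul_const, poisson_one p.1 hp0, poisson]
  rw [e1]
  calc ‖∫ s, pk (p.1 - s, p.2) * (f s - f x)‖ ≤ ∫ s, ‖pk (p.1 - s, p.2) * (f s - f x)‖ :=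
        norm_integral_le_integral_norm _
    _ = ∫ s, pk (p.1 - s, p.2) * g s := by
        congr 1; funext s
        rw [norm_mul, Real.norm_of_nonneg (pk_nonneg (q := (p.1 - s, p.2)) hp0.le)]
    _ ≤ ∫ s, C * (pk (x - s, p.2) * g s) := by
        refine integral_mono (hgint _) ((hgint x).const_mul C) fun s => ?_
        simp only
        rw [← mul_assoc]
        exact mul_le_mul_of_nonneg_right (hC x p.1 s p.2 hp0 hpA) (hg0 s)
    _ = C * poisson g (x, p.2) := by rw [integral_const_mul]; rfl
    _ ≤ _ := by
        refine mul_le_mul_of_nonneg_left ?_ hC0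
        exact poisson_le_dyadic hg0 hgl x hp0 (hgint x)
          (Summable.of_norm_bounded hgeo (hbd p.2 hp0))

/-! ### Weak limits of bounded sequences of functions -/

/-- Weak compactness of bounded sets of `L²`, in the form used below: along a fixed nonprincipal
ultrafilter, a uniformly bounded sequence of functions on a finite measure space converges weakly
when tested against square integrable functions. -/
lemma exists_weak_limit {X : Type*} [MeasurableSpace X] (μ : Measure X) [IsFiniteMeasure μ]
    (φ : ℕ → X → ℝ) (hφ : ∀ n, Measurable (φ n)) (M : ℝ) (hM : ∀ n x, |φ n x| ≤ M) :
    ∃ ψ : X → ℝ, Integrable ψ μ ∧ ∀ k : X → ℝ, MemLp k 2 μ →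
      Tendsto (fun n => ∫ x, φ n x * k x ∂μ) (hyperfilter ℕ : Filter ℕ)
        (𝓝 (∫ x, ψ x * k x ∂μ)) := by
  have hLp : ∀ n, MemLp (φ n) 2 μ := fun n =>
    MemLp.of_bound (hφ n).aestronglyMeasurable M (Eventually.of_forall (hM n))
  set F : ℕ → Lp ℝ 2 μ := fun n => (hLp n).toLp with hF
  obtain ⟨C, hC⟩ : ∃ C : ℝ, ∀ n, ‖F n‖ ≤ C :=
    ⟨_, fun n => Lp.norm_le_of_ae_bound (le_max_right M 0) (by
      filter_upwards [(hLp n).coeFn_toLp] with x hx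
      rw [hx, Real.norm_eq_abs]
      exact (hM n x).trans (le_max_left _ _))⟩
  set g : ℕ → WeakDual ℝ (Lp ℝ 2 μ) := fun n =>
    StrongDual.toWeakDual (InnerProductSpace.toDual ℝ (Lp ℝ 2 μ) (F n)) with hg
  have hK := WeakDual.isCompact_closedBall (𝕜 := ℝ) (E := Lp ℝ 2 μ) 0 C
  obtain ⟨ξ, -, hξ⟩ := hK.ultrafilter_le_nhds ((hyperfilter ℕ).map g) (by
    rw [le_principal_iff, Ultrafilter.coe_map]
    refine mem_map.2 (univ_mem' fun n => ?_)
    simp [hg, hC n])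
  refine ⟨((InnerProductSpace.toDual ℝ (Lp ℝ 2 μ)).symm (WeakDual.toStrongDual ξ) : Lp ℝ 2 μ),
    (Lp.memLp _).integrable one_le_two, fun k hk => ?_⟩
  have h1 : Tendsto (fun n => g n hk.toLp) (hyperfilter ℕ : Filter ℕ) (𝓝 (ξ hk.toLp)) :=
    ((WeakDual.eval_continuous hk.toLp).tendsto ξ).comp hξ
  have h2 : ξ hk.toLp = ∫ x, ((InnerProductSpace.toDual ℝ (Lp ℝ 2 μ)).symm
      (WeakDual.toStrongDual ξ) : Lp ℝ 2 μ) x * k x ∂μ := by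
    have : ξ hk.toLp = ⟪(InnerProductSpace.toDual ℝ (Lp ℝ 2 μ)).symm
      (WeakDual.toStrongDual ξ), hk.toLp⟫ := by
      rw [InnerProductSpace.toDual_symm_apply]; rfl
    rw [this, L2.inner_def]
    refine integral_congr_ae ?_
    filter_upwards [hk.coeFn_toLp] with x hx
    rw [hx]; simp [mul_comm]
  have h3 : ∀ n, g n hk.toLp = ∫ x, φ n x * k x ∂μ := by
    intro n
    have : g n hk.toLp = ⟪F n, hk.toLp⟫ := rfl
    rw [this, L2.inner_def]
    refine integral_congr_ae ?_
    filter_upwards [hk.coeFn_toLp, (hLp n).coeFn_toLp] with x hx hx'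
    rw [hx, hx']; simp [mul_comm]
  rw [← h2]
  simpa only [h3] using h1

/-! ### Comparison with a Poisson integral by the maximum principle -/

lemma hasGLap_quadratic {d : ℕ} (A B : ℝ) (p : Ed d × ℝ) :
    HasGLap (fun q => A * q.2 + B * q.2 ^ 2) p (2 * B) := by
  have h := hasGLap_of_lines (w := fun q : Ed d × ℝ => A * q.2 + B * q.2 ^ 2) (p := p)
    (D := fun e τ => A * e.2 + 2 * B * (p.2 + τ * e.2) * e.2)
    (D2 := fun e => 2 * B * e.2 ^ 2)
    (fun e => Eventually.of_forall fun τ => by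
      simp only [Prod.snd_add, Prod.smul_snd, smul_eq_mul]
      have h1 : HasDerivAt (fun t : ℝ => p.2 + t * e.2) e.2 τ := by
        simpa using ((hasDerivAt_id τ).mul_const e.2).const_add p.2
      refine ((h1.const_mul A).add ((h1.pow 2).const_mul B)).congr_deriv ?_
      simp; ring)
    (fun e => by
      have h1 : HasDerivAt (fun t : ℝ => p.2 + t * e.2) e.2 0 := by
        simpa using ((hasDerivAt_id (0 : ℝ)).mul_const e.2).const_add p.2
      refine (((h1.const_mul (2 * B)).mul_const e.2).const_add (A * e.2)).congr_deriv ?_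
      ring)
  simpa using h

/-- The Poisson integral of a bounded continuous function in the form that makes sense, and is
continuous, up to the boundary. -/
def pext {d : ℕ} (φ : Ed d → ℝ) (q : Ed d × ℝ) : ℝ := ∫ s, pk (s, 1) * φ (q.1 - q.2 • s)

lemma pk_one_continuous (d : ℕ) : Continuous fun s : Ed d => pk (s, 1) := by
  refine continuous_iff_continuousAt.2 fun t => ?_
  exact ContinuousAt.comp (g := pk) (f := fun t : Ed d => (t, (1 : ℝ)))
    (pk_continuousAt one_pos) (by fun_prop)

lemma pext_continuous {d : ℕ} {φ : Ed d → ℝ} (hφ : Continuous φ) {M : ℝ}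
    (hM : ∀ x, |φ x| ≤ M) : Continuous (pext φ) := by
  have h1 := pk_one_continuous d
  refine continuous_of_dominated (bound := fun s => pk (s, 1) * M) (fun q => ?_)
    (fun q => Eventually.of_forall fun s => ?_) ((pk_integrable_one d).mul_const M)
    (Eventually.of_forall fun s => ?_)
  · exact (h1.mul (by fun_prop)).aestronglyMeasurable
  · rw [norm_mul, Real.norm_of_nonneg (pk_nonneg (q := (s, (1 : ℝ))) zero_le_one)]
    exact mul_le_mul_of_nonneg_left (hM _) (pk_nonneg (q := (s, (1 : ℝ))) zero_le_one)
  · fun_prop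

lemma pext_abs_le {d : ℕ} {φ : Ed d → ℝ} {M : ℝ} (hM : ∀ x, |φ x| ≤ M) (q : Ed d × ℝ) :
    |pext φ q| ≤ pkMass d * M := by
  rw [pkMass, ← integral_mul_const, ← Real.norm_eq_abs, pext]
  refine norm_integral_le_of_norm_le ((pk_integrable_one d).mul_const M)
    (Eventually.of_forall fun s => ?_)
  rw [norm_mul, Real.norm_of_nonneg (pk_nonneg (q := (s, (1 : ℝ))) zero_le_one)]
  exact mul_le_mul_of_nonneg_left (hM _) (pk_nonneg (q := (s, (1 : ℝ))) zero_le_one)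

lemma pext_zero {d : ℕ} (φ : Ed d → ℝ) (x : Ed d) : pext φ (x, 0) = pkMass d * φ x := by
  simp [pext, pkMass, integral_mul_const]

/-- Maximum principle on the sawtooth region over `F` truncated at height `ε`: a function `v` with
bounded generalized Laplacian exceeds the Poisson integral of its trace `φ` at height `ε` by at
most a barrier. The barrier consists of a multiple of `poisson f`, which is large on the lateral
boundary of the region, a linear function, which is large on its top, and a concave quadratic,
whose Laplacian beats that of `v`. -/
lemma comparison {d : ℕ} {F : Set (Ed d)} (hF : IsCompact F) (hF0 : F.Nonempty)
    {b h ε M c : ℝ} (hb : 0 < b) (hh : 0 < h) (hh2 : h ≤ 1) (hε : 0 < ε) (hM : 0 ≤ M)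
    (hc : 0 < c) {v : Ed d × ℝ → ℝ} {S : Set (Ed d × ℝ)}
    (hS : ∀ p : Ed d × ℝ, ε ≤ p.2 → p.2 ≤ h + ε → infDist p.1 F ≤ b * p.2 → p ∈ S)
    (hvc : ContinuousOn v S) (hvM : ∀ p ∈ S, v p ≤ M)
    (hvL : ∀ p ∈ S, ∃ L, |L| ≤ M ∧ HasGLap v p L)
    {φ : Ed d → ℝ} (hφc : Continuous φ) (hφi : Integrable φ) (hφM : ∀ x, |φ x| ≤ M)
    (hφv : ∀ x, infDist x F ≤ b * ε → φ x = v (x, ε))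
    {f : Ed d → ℝ} (hfi : Integrable f) (hf0 : ∀ x, 0 ≤ f x)
    (hfc : ∀ x y, ε ≤ y → y ≤ h + ε → infDist x F = b * y → c ≤ poisson f (x, y))
    (q : Ed d × ℝ) (hq0 : 0 < q.2) (hqh : q.2 ≤ h) (hqF : infDist q.1 F ≤ b * (q.2 + ε)) :
    v (q.1, q.2 + ε) - (pkMass d)⁻¹ * poisson φ q ≤
      2 * M / c * poisson f (q.1, q.2 + ε) + 2 * M / h * q.2 + (M + 1) * (q.2 - q.2 ^ 2) := by
  set m := pkMass d with hm
  have hm0 : 0 < m := pkMass_pos d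
  have hpf0 : ∀ p : Ed d × ℝ, 0 ≤ p.2 → 0 ≤ poisson f p := fun p hp =>
    integral_nonneg fun s => mul_nonneg (pk_nonneg (q := (p.1 - s, p.2)) hp) (hf0 s)
  have hpe : ∀ p : Ed d × ℝ, 0 < p.2 → poisson φ p = pext φ p := fun p hp =>
    poisson_eq φ p.1 hp
  set K : Set (Ed d × ℝ) := {p | 0 ≤ p.2 ∧ p.2 ≤ h ∧ infDist p.1 F ≤ b * (p.2 + ε)} with hK
  have hcd : Continuous fun p : Ed d × ℝ => infDist p.1 F :=
    (continuous_infDist_pt F).comp continuous_fst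
  have hKclosed : IsClosed K :=
    (isClosed_le continuous_const continuous_snd).inter
      ((isClosed_le continuous_snd continuous_const).inter
        (isClosed_le hcd (by fun_prop)))
  have hKc : IsCompact K := by
    have h1 : IsCompact (cthickening (b * (h + ε)) F ×ˢ Set.Icc 0 h) :=
      hF.cthickening.prod isCompact_Icc
    refine h1.of_isClosed_subset hKclosed fun p hp => ⟨?_, hp.1, hp.2.1⟩
    rw [cthickening_eq_preimage_infEDist, Set.mem_preimage, Set.mem_Iic,
      ENNReal.le_ofReal_iff_toReal_le (infEDist_ne_top hF0) (by positivity)]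
    exact hp.2.2.trans (by have := hp.2.1; gcongr)
  have hKS : ∀ p ∈ K, (p.1, p.2 + ε) ∈ S := fun p hp =>
    hS _ (by simpa using hp.1) (by simpa using hp.2.1) hp.2.2
  set w₀ : Ed d × ℝ → ℝ := fun p => -(2 * M / c) * poisson f (p.1, p.2 + ε) +
    ((-(2 * M / h) - (M + 1)) * p.2 + (M + 1) * p.2 ^ 2) with hw₀
  set w : Ed d × ℝ → ℝ := fun p => v (p.1, p.2 + ε) + (-m⁻¹ * pext φ p + w₀ p) with hw
  have hwc : ContinuousOn w K := by
    have h1 : ContinuousOn (fun p : Ed d × ℝ => v (p.1, p.2 + ε)) K :=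
      hvc.comp (by fun_prop : Continuous fun p : Ed d × ℝ => (p.1, p.2 + ε)).continuousOn hKS
    have h2 : ContinuousOn (fun p : Ed d × ℝ => poisson f (p.1, p.2 + ε)) K := by
      intro p hp
      have h3 : ContinuousAt (poisson f) (p.1, p.2 + ε) :=
        poisson_continuousAt hfi (by have := hp.1; simp only; linarith)
      exact (ContinuousAt.comp (f := fun p : Ed d × ℝ => (p.1, p.2 + ε)) h3
        (by fun_prop)).continuousWithinAt
    have h3 := (pext_continuous hφc hφM).continuousOn (s := K)
    exact h1.add ((continuousOn_const.mul h3).add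
      ((continuousOn_const.mul h2).add (by fun_prop)))
  obtain ⟨p, hpK, hpmax⟩ := hKc.exists_isMaxOn ⟨q, hq0.le, hqh, hqF⟩ hwc
  have hwp : w p ≤ 0 := by
    obtain ⟨hp0, hph, hpF⟩ := id hpK
    have t1 : v (p.1, p.2 + ε) ≤ M := hvM _ (hKS p hpK)
    have t2 : -m⁻¹ * pext φ p ≤ M := by
      have := (abs_le.1 (pext_abs_le hφM p)).1
      rw [neg_mul, neg_le, ← sub_nonneg]
      have h2 : 0 ≤ m⁻¹ * (pext φ p + m * M) := mul_nonneg (by positivity) (by linarith)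
      rw [mul_add, inv_mul_cancel_left₀ hm0.ne'] at h2
      linarith
    have t3 : 0 ≤ 2 * M / c * poisson f (p.1, p.2 + ε) :=
      mul_nonneg (by positivity) (hpf0 _ (by simp only; linarith))
    have t4 : 0 ≤ 2 * M / h * p.2 := by positivity
    have t5 : 0 ≤ (M + 1) * (p.2 - p.2 ^ 2) := mul_nonneg (by linarith) (by nlinarith)
    simp only [hw, hw₀]
    rcases hp0.eq_or_lt with h0 | h0
    · have e1 : φ p.1 = v (p.1, ε) := hφv _ (by rwa [← h0, zero_add] at hpF)
      have e2 : pext φ p = m * v (p.1, ε) := by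
        rw [← e1, ← pext_zero]; congr 1; exact Prod.ext rfl h0.symm
      rw [e2, neg_mul m⁻¹, inv_mul_cancel_left₀ hm0.ne']
      rw [← h0, zero_add] at t3 ⊢
      linarith
    rcases hph.eq_or_lt with h1 | h1
    · have : 2 * M / h * p.2 = 2 * M := by rw [h1]; field_simp
      linarith
    rcases hpF.eq_or_lt with h2 | h2
    · have h3 : 2 * M / c * c ≤ 2 * M / c * poisson f (p.1, p.2 + ε) :=
        mul_le_mul_of_nonneg_left (hfc _ _ (by linarith) (by linarith) h2) (by positivity)
      rw [div_mul_cancel₀ _ hc.ne'] at h3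
      linarith
    -- at an interior maximum the generalized Laplacian, which is positive, must be nonpositive
    exfalso
    obtain ⟨L, hLM, hL⟩ := hvL _ (hKS p hpK)
    have hKn : ∀ᶠ r : Ed d × ℝ in 𝓝 p, r ∈ K ∧ 0 < r.2 := by
      have i1 : ∀ᶠ r : Ed d × ℝ in 𝓝 p, 0 < r.2 := continuousAt_snd.eventually (lt_mem_nhds h0)
      have i2 : ∀ᶠ r : Ed d × ℝ in 𝓝 p, r.2 < h := continuousAt_snd.eventually (gt_mem_nhds h1)
      have i3 : ∀ᶠ r : Ed d × ℝ in 𝓝 p, infDist r.1 F < b * (r.2 + ε) :=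
        (isOpen_lt hcd (by fun_prop)).mem_nhds h2
      filter_upwards [i1, i2, i3] with r h1 h2 h3
      exact ⟨⟨h1.le, h2.le, h3.le⟩, h1⟩
    have hG : HasGLap (fun r => v (r.1, r.2 + ε) + (-m⁻¹ * poisson φ r + w₀ r)) p
        (L + (-m⁻¹ * 0 + (-(2 * M / c) * 0 + 2 * (M + 1)))) :=
      (HasGLap.shift hL).add (((poisson_hasGLap hφi h0).const_mul _).add
        (((HasGLap.shift (poisson_hasGLap hfi (by simp only; linarith))).const_mul _).add
          (hasGLap_quadratic _ _ p)))
    have := hG.nonpos_of_isLocalMax (by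
      filter_upwards [hKn] with r hr
      rw [hpe r hr.2, hpe p h0]
      exact hpmax hr.1)
    have := (abs_le.1 hLM).1
    linarith
  have hfin : w q ≤ 0 := (hpmax (⟨hq0.le, hqh, hqF⟩ : q ∈ K)).trans hwp
  simp only [hw, hw₀, ← hpe q hq0] at hfin
  linarith

/-! ### The local Fatou theorem for functions with bounded Laplacian -/

/-- A function that is continuous and bounded on the slice `{infDist x F ≤ s} × {ε}` has a
continuous trace on all of `ℝ^d` with the same bound and with support in a given ball. -/
lemma exists_trace {d : ℕ} {F : Set (Ed d)} {s ε M ρ : ℝ} (hM : 0 ≤ M) {v : Ed d × ℝ → ℝ}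
    {S : Set (Ed d × ℝ)} (hvc : ContinuousOn v S) (hvM : ∀ p ∈ S, |v p| ≤ M)
    (hS : ∀ x, infDist x F ≤ s → (x, ε) ∈ S) (hρ : ∀ x, infDist x F ≤ s → ‖x‖ ≤ ρ) :
    ∃ φ : Ed d → ℝ, Continuous φ ∧ (∀ x, |φ x| ≤ M) ∧ (∀ x, ρ + 1 ≤ ‖x‖ → φ x = 0) ∧
      ∀ x, infDist x F ≤ s → φ x = v (x, ε) := by
  set T : Set (Ed d) := {x | infDist x F ≤ s} with hT
  have hTc : IsClosed T := isClosed_le (continuous_infDist_pt F) continuous_const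
  have hgc : Continuous fun x : T => v (x.1, ε) :=
    hvc.comp_continuous (by fun_prop) fun x => hS x.1 x.2
  obtain ⟨g, hg2, hg1⟩ := ContinuousMap.exists_restrict_eq_forall_mem_of_closed
    (⟨_, hgc⟩ : C(T, ℝ)) (t := Set.Icc (-M) M)
    (fun x => abs_le.1 (hvM _ (hS x.1 x.2))) ⟨0, by simpa using hM⟩ hTc
  refine ⟨fun x => max 0 (min 1 (ρ + 1 - ‖x‖)) * g x, by fun_prop, fun x => ?_, fun x hx => ?_,
    fun x hx => ?_⟩
  · have h1 : |max 0 (min 1 (ρ + 1 - ‖x‖))| ≤ 1 := by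
      rw [abs_of_nonneg (le_max_left _ _)]
      exact max_le zero_le_one (min_le_left _ _)
    rw [abs_mul]
    have h2 : |g x| ≤ M := abs_le.2 (hg2 x)
    nlinarith [abs_nonneg (g x)]
  · simp only
    rw [max_eq_left ((min_le_right _ _).trans (by linarith)), zero_mul]
  · simp only
    rw [min_eq_left (by have := hρ x hx; linarith), max_eq_right zero_le_one, one_mul]
    exact DFunLike.congr_fun hg1 ⟨x, hx⟩

/-- **Local Fatou theorem.** A function that is bounded and has bounded generalized Laplacian in a
sawtooth region over the compact set `F` has non-tangential limits at almost every point of `F`. -/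
lemma fatou_local {d : ℕ} {F : Set (Ed d)} (hF : IsCompact F) {a h M : ℝ} (ha : 0 < a)
    (hh : 0 < h) (hM : 0 ≤ M) {v : Ed d × ℝ → ℝ}
    (hvc : ContinuousOn v {p | 0 < p.2 ∧ p.2 < h ∧ infDist p.1 F < a * p.2})
    (hvM : ∀ p : Ed d × ℝ, 0 < p.2 → p.2 < h → infDist p.1 F < a * p.2 → |v p| ≤ M)
    (hvL : ∀ p : Ed d × ℝ, 0 < p.2 → p.2 < h → infDist p.1 F < a * p.2 →
      ∃ L, |L| ≤ M ∧ HasGLap v p L) :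
    ∀ᵐ x : Ed d, x ∈ F → ∃ L : ℝ, ∀ A : ℝ,
      Tendsto v (𝓝[cone A x] (x, (0 : ℝ))) (𝓝 L) := by
  rcases F.eq_empty_or_nonempty with rfl | hF0
  · simp
  set S : Set (Ed d × ℝ) := {p | 0 < p.2 ∧ p.2 < h ∧ infDist p.1 F < a * p.2} with hSdef
  have hcd : Continuous fun p : Ed d × ℝ => infDist p.1 F :=
    (continuous_infDist_pt F).comp continuous_fst
  have hSo : IsOpen S :=
    (isOpen_lt continuous_const continuous_snd).inter
      ((isOpen_lt continuous_snd continuous_const).inter (isOpen_lt hcd (by fun_prop)))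
  obtain ⟨b, hb, hba⟩ : ∃ b, 0 < b ∧ b < a := ⟨a / 2, by linarith, by linarith⟩
  obtain ⟨h₁, hh₁, hh₁1, hh₁h⟩ : ∃ h₁ : ℝ, 0 < h₁ ∧ h₁ + h₁ ≤ 1 ∧ h₁ + h₁ ≤ h := by
    refine ⟨min h 1 / 2, by positivity, ?_, ?_⟩ <;> rw [add_halves]
    exacts [min_le_right _ _, min_le_left _ _]
  set ε : ℕ → ℝ := fun n => h₁ / (n + 2) with hεdef
  have hε0 : ∀ n, 0 < ε n := fun n => by simp only [hεdef]; positivity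
  have hε1 : ∀ n, ε n < h₁ := fun n => by
    simp only [hεdef]
    rw [div_lt_iff₀ (by positivity)]
    nlinarith [(Nat.cast_nonneg n : (0 : ℝ) ≤ n)]
  have hεlim : Tendsto ε (hyperfilter ℕ : Filter ℕ) (𝓝 0) := by
    have h1 : Tendsto ε atTop (𝓝 0) :=
      tendsto_const_nhds.div_atTop
        (tendsto_atTop_add_const_right _ _ tendsto_natCast_atTop_atTop)
    exact h1.mono_left Nat.hyperfilter_le_atTop
  obtain ⟨ρ, hρ⟩ : ∃ ρ, ∀ x ∈ F, ‖x‖ ≤ ρ := hF.isBounded.exists_norm_le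
  have hρ0 : 0 ≤ ρ := (norm_nonneg _).trans (hρ _ hF0.some_mem)
  have hρ' : ∀ x s, infDist x F ≤ s → ‖x‖ ≤ ρ + s := by
    intro x s hx
    obtain ⟨z, hz, hxz⟩ := hF.exists_infDist_eq_dist hF0 x
    have h1 := norm_le_norm_add_norm_sub z x
    rw [← dist_eq_norm, dist_comm, ← hxz] at h1
    linarith [hρ z hz]
  set r : ℝ := ρ + 2 * b + 1 with hr
  set B : Set (Ed d) := closedBall 0 r with hB
  have hBm : MeasurableSet B := measurableSet_closedBall
  have hBfin : volume B < ⊤ := measure_closedBall_lt_top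
  -- the continuous traces of `v` at height `ε n`
  have hεS : ∀ n x, infDist x F ≤ b * ε n → (x, ε n) ∈ S := fun n x hx =>
    ⟨hε0 n, by have := hε1 n; simp only; linarith, by have := hε0 n; simp only; nlinarith⟩
  have htr := fun n => exists_trace (ρ := ρ + b) hM hvc (fun p hp => hvM p hp.1 hp.2.1 hp.2.2)
    (hεS n) (fun x hx => (hρ' x _ hx).trans (by
      have := hε1 n; have := hε0 n; nlinarith))
  choose φ hφc hφM hφ0 hφv using htr
  have hφB : ∀ n x, x ∉ B → φ n x = 0 := by
    intro n x hx
    refine hφ0 n x ?_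
    rw [hB, mem_closedBall, dist_zero_right, not_le] at hx
    linarith
  have hφi : ∀ n, Integrable (φ n) := fun n =>
    (hφc n).integrable_of_hasCompactSupport
      (HasCompactSupport.intro (isCompact_closedBall 0 r) fun x hx => hφB n x hx)
  -- the boundary data of the barrier
  set f : Ed d → ℝ := (B \ F).indicator fun _ => 1 with hf
  have hfi : Integrable f := by
    refine (integrable_indicator_iff (hBm.diff hF.measurableSet)).2 ?_
    exact integrableOn_const ((measure_mono Set.sdiff_subset).trans_lt hBfin).ne
  have hf0 : ∀ x, 0 ≤ f x := fun x => Set.indicator_nonneg (fun _ _ => zero_le_one) x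
  obtain ⟨c, hc, hlow⟩ := poisson_lower d hb
  have hfc : ∀ x y, 0 < y → y ≤ 1 → ‖x‖ ≤ ρ + b + 1 → b * y ≤ infDist x F →
      c ≤ poisson f (x, y) := by
    intro x y hy hy1 hx hxF
    refine hlow f hfi hf0 x y hy fun t ht => ?_
    have htB : t ∈ B := by
      rw [hB, mem_closedBall, dist_zero_right]
      have h1 := norm_le_norm_add_norm_sub x t
      rw [← dist_eq_norm, dist_comm] at h1
      rw [mem_ball] at ht
      nlinarith
    have htF : t ∉ F := fun h => by
      have h1 := infDist_le_dist_of_mem (x := x) h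
      rw [mem_ball, dist_comm] at ht
      linarith
    have htBF : t ∈ B \ F := ⟨htB, htF⟩
    rw [hf, Set.indicator_of_mem htBF]
  set m := pkMass d with hm
  have hm0 : 0 < m := pkMass_pos d
  have hcomp : ∀ n (q : Ed d × ℝ), 0 < q.2 → q.2 ≤ h₁ → infDist q.1 F ≤ b * q.2 →
      |v (q.1, q.2 + ε n) - m⁻¹ * poisson (φ n) q| ≤
      2 * M / c * poisson f (q.1, q.2 + ε n) + 2 * M / h₁ * q.2 + (M + 1) * (q.2 - q.2 ^ 2) := by
    intro n q hq0 hqh hqF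
    have e0 := hε0 n
    have e1 := hε1 n
    have hS : ∀ p : Ed d × ℝ, ε n ≤ p.2 → p.2 ≤ h₁ + ε n → infDist p.1 F ≤ b * p.2 → p ∈ S :=
      fun p h1 h2 h3 => ⟨by linarith, by linarith, h3.trans_lt (by nlinarith)⟩
    have hfc' : ∀ x y, ε n ≤ y → y ≤ h₁ + ε n → infDist x F = b * y → c ≤ poisson f (x, y) :=
      fun x y h1 h2 h3 => hfc x y (by linarith) (by linarith)
        ((hρ' x _ h3.le).trans (by nlinarith)) h3.ge
    have hqF' : infDist q.1 F ≤ b * (q.2 + ε n) := hqF.trans (by nlinarith)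
    refine abs_sub_le_iff.2 ⟨?_, ?_⟩
    · exact comparison hF hF0 hb hh₁ (by linarith) e0 hM hc hS hvc
        (fun p hp => (abs_le.1 (hvM p hp.1 hp.2.1 hp.2.2)).2)
        (fun p hp => hvL p hp.1 hp.2.1 hp.2.2) (hφc n) (hφi n) (hφM n) (hφv n) hfi hf0 hfc'
        q hq0 hqh hqF'
    · have hneg : poisson (fun x => -φ n x) q = -poisson (φ n) q := by
        simp only [poisson, mul_neg, integral_neg]
      have := comparison (v := fun p => -v p) (φ := fun x => -φ n x)
        hF hF0 hb hh₁ (by linarith) e0 hM hc hS hvc.neg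
        (fun p hp => by have := (abs_le.1 (hvM p hp.1 hp.2.1 hp.2.2)).1; linarith)
        (fun p hp => by
          obtain ⟨L, h1, h2⟩ := hvL p hp.1 hp.2.1 hp.2.2
          refine ⟨-1 * L, by simpa using h1, ?_⟩
          simpa only [neg_one_mul] using h2.const_mul (-1))
        (hφc n).neg (hφi n).neg (fun x => by rw [abs_neg]; exact hφM n x)
        (fun x hx => by rw [hφv n x hx]) hfi hf0 hfc' q hq0 hqh hqF'
      rw [hneg] at this
      linarith
  -- a weak limit of the traces provides the boundary function
  have : IsFiniteMeasure ((volume : Measure (Ed d)).restrict B) :=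
    ⟨by rwa [Measure.restrict_apply_univ]⟩
  obtain ⟨ψ, hψi, hψ⟩ := exists_weak_limit ((volume : Measure (Ed d)).restrict B) φ
    (fun n => (hφc n).measurable) M hφM
  set Φ : Ed d → ℝ := B.indicator ψ with hΦ
  have hΦi : Integrable Φ := (integrable_indicator_iff hBm).2 hψi
  have hBint : ∀ (g : Ed d → ℝ), (∀ x, x ∉ B → g x = 0) → ∀ q : Ed d × ℝ,
      poisson g q = ∫ t in B, g t * pk (q.1 - t, q.2) := by
    intro g hg q
    rw [setIntegral_eq_integral_of_forall_compl_eq_zero (fun x hx => by rw [hg x hx, zero_mul])]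
    simp only [poisson, mul_comm]
  have hweak : ∀ q : Ed d × ℝ, 0 < q.2 →
      Tendsto (fun n => poisson (φ n) q) (hyperfilter ℕ : Filter ℕ) (𝓝 (poisson Φ q)) := by
    intro q hq
    have h1 := hψ (fun t => pk (q.1 - t, q.2))
      (MemLp.of_bound (pk_slice_continuous q.1 hq).aestronglyMeasurable ((q.2 ^ d)⁻¹)
        (Eventually.of_forall fun t => by
          rw [Real.norm_of_nonneg (pk_nonneg (q := (q.1 - t, q.2)) hq.le)]
          exact pk_le_inv hq le_rfl))
    simp only [fun n => hBint (φ n) (hφB n) q]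
    rw [hBint Φ (fun x hx => Set.indicator_of_notMem hx _)]
    have h2 : ∫ t in B, Φ t * pk (q.1 - t, q.2) = ∫ t in B, ψ t * pk (q.1 - t, q.2) :=
      setIntegral_congr_fun hBm fun t ht => by simp only [hΦ, Set.indicator_of_mem ht]
    rw [h2]
    exact h1
  have hmain : ∀ q : Ed d × ℝ, 0 < q.2 → q.2 ≤ h₁ → infDist q.1 F ≤ b * q.2 →
      |v q - m⁻¹ * poisson Φ q| ≤
      2 * M / c * poisson f q + 2 * M / h₁ * q.2 + (M + 1) * (q.2 - q.2 ^ 2) := by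
    intro q hq0 hqh hqF
    have hsh : Tendsto (fun n => (q.1, q.2 + ε n)) (hyperfilter ℕ : Filter ℕ) (𝓝 q) := by
      have := (tendsto_const_nhds (x := q.1)).prodMk_nhds
        ((tendsto_const_nhds (x := q.2)).add hεlim)
      simpa using this
    have hqS : q ∈ S := ⟨hq0, by linarith, hqF.trans_lt (by nlinarith)⟩
    have l1 := ((hvc.continuousAt (hSo.mem_nhds hqS)).tendsto.comp hsh).sub
      ((hweak q hq0).const_mul m⁻¹)
    have l2 := (poisson_continuousAt hfi hq0).tendsto.comp hsh
    exact le_of_tendsto_of_tendsto' l1.abs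
      (((l2.const_mul (2 * M / c)).add_const _).add_const _)
      fun n => hcomp n q hq0 hqh hqF
  filter_upwards [poisson_fatou hΦi, poisson_fatou hfi] with x hx1 hx2 hxF
  refine ⟨Φ x, fun A => ?_⟩
  have hfx : f x = 0 := by rw [hf, Set.indicator_of_notMem (fun h => h.2 hxF)]
  specialize hx1 A
  specialize hx2 A
  rw [hfx, mul_zero] at hx2
  have hsnd : Tendsto (fun p : Ed d × ℝ => p.2) (𝓝[cone A x] (x, (0 : ℝ))) (𝓝 0) :=
    (continuous_snd.tendsto (x, (0 : ℝ))).mono_left nhdsWithin_le_nhds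
  have hfst : Tendsto (fun p : Ed d × ℝ => ‖p.1‖) (𝓝[cone A x] (x, (0 : ℝ))) (𝓝 ‖x‖) :=
    (continuous_fst.norm.tendsto (x, (0 : ℝ))).mono_left nhdsWithin_le_nhds
  have hG : Tendsto (fun q : Ed d × ℝ => 2 * M / c * poisson f q + 2 * M / h₁ * q.2 +
      (M + 1) * (q.2 - q.2 ^ 2)) (𝓝[cone A x] (x, (0 : ℝ))) (𝓝 0) := by
    simpa using ((hx2.const_mul (2 * M / c)).add (hsnd.const_mul (2 * M / h₁))).add
      ((hsnd.sub (hsnd.pow 2)).const_mul (M + 1))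
  have hev : ∀ᶠ q in 𝓝[cone A x] (x, (0 : ℝ)), ‖v q - m⁻¹ * poisson Φ q‖ ≤
      2 * M / c * poisson f q + 2 * M / h₁ * q.2 + (M + 1) * (q.2 - q.2 ^ 2) := by
    filter_upwards [self_mem_nhdsWithin, hx2.eventually (gt_mem_nhds hc),
      hsnd.eventually (gt_mem_nhds hh₁),
      hfst.eventually (gt_mem_nhds (lt_add_one ‖x‖))] with q hq1 hq2 hq3 hq4
    refine hmain q hq1.1 hq3.le ?_
    -- otherwise the barrier `poisson f` would be at least `c` at `q`
    by_contra hcon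
    have := hfc q.1 q.2 hq1.1 (by linarith) (by linarith [hρ x hxF]) (not_le.1 hcon).le
    linarith
  have h0 := squeeze_zero_norm' hev hG
  have h1 := h0.add (hx1.const_mul m⁻¹)
  rw [inv_mul_cancel_left₀ hm0.ne', zero_add] at h1
  simpa using h1

/-! ### Removing the first order terms of the Dunkl Laplacian -/

/-- The weight `∏_{α ∈ R₊} |⟨α,x⟩|^{κ(α)}`, for regular `x`. The absolute value is implicit, since
`Real.log t = log |t|`. -/
def wt {d : ℕ} (Rp : Finset (Ed d)) (κ : Ed d → ℝ) (x : Ed d) : ℝ :=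
  Real.exp (∑ α ∈ Rp, κ α * Real.log ⟪α, x⟫)

/-- The logarithmic derivative of `wt` in the direction `e`. -/
def wtB {d : ℕ} (Rp : Finset (Ed d)) (κ : Ed d → ℝ) (e x : Ed d) : ℝ :=
  ∑ α ∈ Rp, κ α * (⟪α, e⟫ / ⟪α, x⟫)

/-- The Laplacian of `wt`. -/
def wtLap {d : ℕ} (Rp : Finset (Ed d)) (κ : Ed d → ℝ) (x : Ed d) : ℝ :=
  wt Rp κ x * ∑ i : Fin d, (wtB Rp κ (EuclideanSpace.single i 1) x ^ 2 -
    ∑ α ∈ Rp, κ α * (⟪α, EuclideanSpace.single i (1 : ℝ)⟫ ^ 2 / ⟪α, x⟫ ^ 2))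

lemma inner_line_hasDerivAt {d : ℕ} (α x e : Ed d) (τ : ℝ) :
    HasDerivAt (fun t : ℝ => ⟪α, x + t • e⟫) ⟪α, e⟫ τ := by
  simp only [inner_add_right, inner_smul_right]
  simpa using ((hasDerivAt_id τ).mul_const ⟪α, e⟫).const_add ⟪α, x⟫

lemma wt_line {d : ℕ} {Rp : Finset (Ed d)} (κ : Ed d → ℝ) {x e : Ed d} {τ : ℝ}
    (h : ∀ α ∈ Rp, ⟪α, x + τ • e⟫ ≠ 0) :
    HasDerivAt (fun t : ℝ => wt Rp κ (x + t • e))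
      (wt Rp κ (x + τ • e) * wtB Rp κ e (x + τ • e)) τ := by
  unfold wt wtB
  refine HasDerivAt.exp (HasDerivAt.fun_sum fun α hα => ?_)
  exact ((inner_line_hasDerivAt α x e τ).log (h α hα)).const_mul _

lemma wtB_line {d : ℕ} {Rp : Finset (Ed d)} (κ : Ed d → ℝ) {x : Ed d} (e : Ed d)
    (h : ∀ α ∈ Rp, ⟪α, x⟫ ≠ 0) :
    HasDerivAt (fun t : ℝ => wtB Rp κ e (x + t • e))
      (-∑ α ∈ Rp, κ α * (⟪α, e⟫ ^ 2 / ⟪α, x⟫ ^ 2)) 0 := by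
  unfold wtB
  rw [← Finset.sum_neg_distrib]
  refine HasDerivAt.fun_sum fun α hα => ?_
  have h1 := inner_line_hasDerivAt α x e 0
  refine (((h1.fun_inv (by simpa using h α hα)).const_mul ⟪α, e⟫).const_mul (κ α)).congr_deriv ?_
  simp only [zero_smul, add_zero]
  ring

lemma fderiv_root {d : ℕ} (u : Ed d × ℝ → ℝ) (p : Ed d × ℝ) (α : Ed d) :
    fderiv ℝ u p (α, 0) = ∑ i : Fin d, ⟪α, EuclideanSpace.single i (1 : ℝ)⟫ *
      fderiv ℝ u p (EuclideanSpace.single i 1, 0) := by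
  have h1 : (α, (0 : ℝ)) = ∑ i : Fin d, (α i) • ((EuclideanSpace.single i (1 : ℝ) : Ed d),
      (0 : ℝ)) := by
    refine Prod.ext ?_ (by simp [Prod.snd_sum])
    simp only [Prod.fst_sum, Prod.smul_fst]
    ext j
    simp [Finset.sum_apply, Pi.single_apply]
  rw [h1, map_sum]
  refine Finset.sum_congr rfl fun i _ => ?_
  rw [map_smul, smul_eq_mul]
  congr 1
  simp [EuclideanSpace.inner_single_right]

/-- If `u` is `κ`-harmonic, the product of `u` with the weight `wt` has, at regular points, a
Laplacian involving no derivatives of `u`. -/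
lemma wt_mul_hasGLap {d : ℕ} {Rp : Finset (Ed d)} {κ : Ed d → ℝ} {u : Ed d × ℝ → ℝ}
    {p : Ed d × ℝ} (hu : ContDiffAt ℝ 2 u p) (hp : ∀ α ∈ Rp, ⟪α, p.1⟫ ≠ 0)
    (hlap : dunklLap Rp κ u p = 0) :
    HasGLap (fun q => wt Rp κ q.1 * u q) p
      (wtLap Rp κ p.1 * u p + ∑ α ∈ Rp, 2 * κ α * wt Rp κ p.1 / ⟪α, p.1⟫ ^ 2 *
        (u p - u (reflAt α p.1, p.2))) := by
  have hline : ∀ e : Ed d × ℝ, Tendsto (fun τ : ℝ => p + τ • e) (𝓝 0) (𝓝 p) := by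
    intro e
    have : Continuous fun τ : ℝ => p + τ • e := by fun_prop
    simpa using this.tendsto 0
  have hder : ∀ (e : Ed d × ℝ) τ, HasDerivAt (fun t : ℝ => p + t • e) e τ := fun e τ => by
    simpa using ((hasDerivAt_id τ).smul_const e).const_add p
  have hdiff : ∀ᶠ q in 𝓝 p, DifferentiableAt ℝ u q := by
    filter_upwards [hu.eventually (by simp)] with q hq
    exact hq.differentiableAt (by simp)
  have hfd : DifferentiableAt ℝ (fderiv ℝ u) p :=
    (hu.fderiv_right (m := 1) (by norm_num)).differentiableAt (by simp)
  have hreg : ∀ᶠ q : Ed d × ℝ in 𝓝 p, ∀ α ∈ Rp, ⟪α, q.1⟫ ≠ 0 := by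
    refine (Finset.eventually_all Rp).2 fun α hα => ?_
    have : Continuous fun q : Ed d × ℝ => ⟪α, q.1⟫ := by fun_prop
    exact this.continuousAt.eventually_ne (hp α hα)
  have hU' : ∀ e, HasDerivAt (fun τ : ℝ => fderiv ℝ u (p + τ • e) e) (pd2 u p e) 0 := by
    intro e
    have h1 : DifferentiableAt ℝ (fun q => fderiv ℝ u q e) p := hfd.clm_apply (by fun_prop)
    exact HasFDerivAt.comp_hasDerivAt (f := fun t : ℝ => p + t • e) (0 : ℝ)
      (by simpa using h1.hasFDerivAt) (hder e 0)
  have hU : ∀ e τ, DifferentiableAt ℝ u (p + τ • e) →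
      HasDerivAt (fun t : ℝ => u (p + t • e)) (fderiv ℝ u (p + τ • e) e) τ := by
    intro e τ h
    exact HasFDerivAt.comp_hasDerivAt (f := fun t : ℝ => p + t • e) τ h.hasFDerivAt (hder e τ)
  have key := hasGLap_of_lines (w := fun q => wt Rp κ q.1 * u q) (p := p)
    (D := fun e τ => wt Rp κ (p.1 + τ • e.1) * wtB Rp κ e.1 (p.1 + τ • e.1) * u (p + τ • e) +
      wt Rp κ (p.1 + τ • e.1) * fderiv ℝ u (p + τ • e) e)
    (D2 := fun e => (wt Rp κ p.1 * wtB Rp κ e.1 p.1 * wtB Rp κ e.1 p.1 +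
        wt Rp κ p.1 * (-∑ α ∈ Rp, κ α * (⟪α, e.1⟫ ^ 2 / ⟪α, p.1⟫ ^ 2))) * u p +
      wt Rp κ p.1 * wtB Rp κ e.1 p.1 * fderiv ℝ u p e +
      (wt Rp κ p.1 * wtB Rp κ e.1 p.1 * fderiv ℝ u p e + wt Rp κ p.1 * pd2 u p e))
    (fun e => by
      filter_upwards [(hline e).eventually hdiff, (hline e).eventually hreg] with τ h1 h2
      exact (wt_line κ h2).mul (hU e τ h1))
    (fun e => by
      have h1 := wt_line (Rp := Rp) κ (x := p.1) (e := e.1) (τ := 0) (by simpa using hp)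
      have h2 := wtB_line (Rp := Rp) κ (x := p.1) e.1 hp
      have h3 := hU e 0 (by simpa using hdiff.self_of_nhds)
      have h4 := ((h1.fun_mul h2).fun_mul h3).fun_add (h1.fun_mul (hU' e))
      simpa only [zero_smul, add_zero] using h4)
  convert key using 1
  have e0 : lapE u p = -(2 * ∑ α ∈ Rp, κ α *
    (fderiv ℝ u p (α, 0) / ⟪α, p.1⟫ - (u p - u (reflAt α p.1, p.2)) / ⟪α, p.1⟫ ^ 2)) := by
    unfold dunklLap at hlap; linarith
  have e1 : ∑ i : Fin d, wtB Rp κ (EuclideanSpace.single i 1) p.1 *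
      fderiv ℝ u p (EuclideanSpace.single i 1, 0) =
      ∑ α ∈ Rp, κ α * (fderiv ℝ u p (α, 0) / ⟪α, p.1⟫) := by
    simp only [wtB, Finset.sum_mul]
    rw [Finset.sum_comm]
    refine Finset.sum_congr rfl fun α _ => ?_
    rw [fderiv_root, Finset.sum_div, Finset.mul_sum]
    refine Finset.sum_congr rfl fun i _ => ?_
    ring
  have e2 : wtB Rp κ 0 p.1 = 0 := by simp [wtB]
  have e3 : ∑ i : Fin d, pd2 u p (EuclideanSpace.single i 1, 0) + pd2 u p (0, 1) = lapE u p := rfl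
  have e4 : ∑ α ∈ Rp, 2 * κ α * wt Rp κ p.1 / ⟪α, p.1⟫ ^ 2 * (u p - u (reflAt α p.1, p.2)) =
      wt Rp κ p.1 * (lapE u p + 2 * ∑ i : Fin d, wtB Rp κ (EuclideanSpace.single i 1) p.1 *
      fderiv ℝ u p (EuclideanSpace.single i 1, 0)) := by
    have h1 : ∑ α ∈ Rp, κ α * (fderiv ℝ u p (α, 0) / ⟪α, p.1⟫ -
        (u p - u (reflAt α p.1, p.2)) / ⟪α, p.1⟫ ^ 2) =
        ∑ α ∈ Rp, κ α * (fderiv ℝ u p (α, 0) / ⟪α, p.1⟫) -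
        ∑ α ∈ Rp, κ α * ((u p - u (reflAt α p.1, p.2)) / ⟪α, p.1⟫ ^ 2) := by
      rw [← Finset.sum_sub_distrib]
      exact Finset.sum_congr rfl fun α _ => mul_sub _ _ _
    rw [e0, e1, h1, show ∀ a b w : ℝ, w * (-(2 * (a - b)) + 2 * a) = (2 * w) * b by
      intros; ring, Finset.mul_sum]
    refine Finset.sum_congr rfl fun α _ => ?_
    ring
  rw [e4, ← e3]
  have e5 : ∑ α ∈ Rp, κ α * (⟪α, (0 : Ed d)⟫ ^ 2 / ⟪α, p.1⟫ ^ 2) = 0 := by simp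
  simp only [e2, e5, wtLap]
  set W := wt Rp κ p.1
  set β : Fin d → ℝ := fun i => wtB Rp κ (EuclideanSpace.single i 1) p.1
  set γ : Fin d → ℝ := fun i =>
    ∑ α ∈ Rp, κ α * (⟪α, EuclideanSpace.single i (1 : ℝ)⟫ ^ 2 / ⟪α, p.1⟫ ^ 2)
  set D : Fin d → ℝ := fun i => fderiv ℝ u p (EuclideanSpace.single i 1, 0)
  set P : Fin d → ℝ := fun i => pd2 u p (EuclideanSpace.single i 1, 0)
  have e6 : ∑ i, ((W * β i * β i + W * -γ i) * u p + W * β i * D i +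
      (W * β i * D i + W * P i)) =
      W * (∑ i, (β i ^ 2 - γ i)) * u p + W * (∑ i, P i + 2 * ∑ i, β i * D i) := by
    simp only [Finset.mul_sum, Finset.sum_mul, mul_add, ← Finset.sum_add_distrib]
    refine Finset.sum_congr rfl fun i _ => ?_
    ring
  rw [e6]
  ring

lemma wt_pos {d : ℕ} (Rp : Finset (Ed d)) (κ : Ed d → ℝ) (x : Ed d) : 0 < wt Rp κ x :=
  Real.exp_pos _

lemma wt_continuousAt {d : ℕ} {Rp : Finset (Ed d)} {κ : Ed d → ℝ} {x : Ed d}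
    (h : ∀ α ∈ Rp, ⟪α, x⟫ ≠ 0) : ContinuousAt (wt Rp κ) x := by
  unfold wt
  refine Real.continuous_exp.continuousAt.comp (tendsto_finsetSum _ fun α hα => ?_)
  exact Tendsto.const_mul _ (ContinuousAt.log (by fun_prop) (h α hα))

lemma wtLap_continuousAt {d : ℕ} {Rp : Finset (Ed d)} {κ : Ed d → ℝ} {x : Ed d}
    (h : ∀ α ∈ Rp, ⟪α, x⟫ ≠ 0) : ContinuousAt (wtLap Rp κ) x := by
  unfold wtLap wtB
  refine (wt_continuousAt h).mul (tendsto_finsetSum _ fun i _ => Tendsto.sub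
    (Tendsto.pow (tendsto_finsetSum _ fun α hα => ?_) 2) (tendsto_finsetSum _ fun α hα => ?_))
  · exact Tendsto.const_mul _ (ContinuousAt.div (by fun_prop) (by fun_prop) (h α hα))
  · exact Tendsto.const_mul _ (ContinuousAt.div (by fun_prop) (by fun_prop) (pow_ne_zero 2 (h α hα)))

/-! ### Reflections -/

lemma reflAt_eq_reflection {d : ℕ} {α : Ed d} (hα : ⟪α, α⟫ = (2 : ℝ)) (x : Ed d) :
    reflAt α x = (ℝ ∙ α)ᗮ.reflection x := by
  have h2 : ‖α‖ ^ 2 = 2 := by rw [← real_inner_self_eq_norm_sq, hα]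
  rw [Submodule.reflection_orthogonal_apply, Submodule.reflection_singleton_apply, reflAt]
  simp only [RCLike.ofReal_real_eq_id, id, h2, neg_sub]
  rw [two_smul, ← add_smul, add_halves]

lemma dist_reflAt {d : ℕ} {α : Ed d} (hα : ⟪α, α⟫ = (2 : ℝ)) (x y : Ed d) :
    dist (reflAt α x) (reflAt α y) = dist x y := by
  rw [reflAt_eq_reflection hα, reflAt_eq_reflection hα, LinearIsometryEquiv.dist_map]

lemma ae_reflAt {d : ℕ} {α : Ed d} (hα : ⟪α, α⟫ = (2 : ℝ)) {P : Ed d → Prop}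
    (h : ∀ᵐ x : Ed d, P x) : ∀ᵐ x : Ed d, P (reflAt α x) := by
  have := ((ℝ ∙ α)ᗮ.reflection.measurePreserving).quasiMeasurePreserving.ae h
  simpa only [reflAt_eq_reflection hα] using this

lemma ae_regular {d : ℕ} {R : Finset (Ed d)} (h : ∀ α ∈ R, α ≠ 0) :
    ∀ᵐ x : Ed d, isRegular R x := by
  unfold isRegular
  refine (ae_ball_iff R.countable_toSet).2 fun α hα => ?_
  have h1 := Measure.addHaar_submodule (volume : Measure (Ed d)) (ℝ ∙ α)ᗮ (by
    intro ht
    have : α ∈ (ℝ ∙ α)ᗮ := ht ▸ Submodule.mem_top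
    rw [Submodule.mem_orthogonal_singleton_iff_inner_right, inner_self_eq_zero] at this
    exact h α hα this)
  refine measure_mono_null (fun x hx => ?_) h1
  rw [SetLike.mem_coe, Submodule.mem_orthogonal_singleton_iff_inner_right]
  simpa using hx

/-! ### Exhaustion by compact sets of uniform boundedness -/

/-- Points `x` of the ball of radius `N`, at distance at least `δ / √2` from the reflecting
hyperplanes, such that `u` and its reflections are bounded by `N` on the cone of aperture and
height `δ / 2` with vertex `(x,0)`. -/
def goodSet {d : ℕ} (R : Finset (Ed d)) (u : Ed d × ℝ → ℝ) (N δ : ℝ) : Set (Ed d) :=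
  {x | ‖x‖ ≤ N ∧ (∀ α ∈ R, δ ≤ |⟪α, x⟫|) ∧
    ∀ p ∈ coneT (δ / 2) (δ / 2) x, |u p| ≤ N ∧ ∀ α ∈ R, |u (reflAt α p.1, p.2)| ≤ N}

lemma goodSet_isCompact {d : ℕ} (R : Finset (Ed d)) (u : Ed d × ℝ → ℝ) (N δ : ℝ) :
    IsCompact (goodSet R u N δ) := by
  have h1 : IsClosed {x : Ed d | ∀ α ∈ R, δ ≤ |⟪α, x⟫|} := by
    simp only [Set.ofPred_forall]
    exact isClosed_biInter fun α _ => isClosed_le continuous_const (by fun_prop)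
  have h2 : IsClosed {x : Ed d | ∀ p ∈ coneT (δ / 2) (δ / 2) x,
      |u p| ≤ N ∧ ∀ α ∈ R, |u (reflAt α p.1, p.2)| ≤ N} := by
    simp only [Set.ofPred_forall]
    refine isClosed_iInter fun p => ?_
    by_cases hp : |u p| ≤ N ∧ ∀ α ∈ R, |u (reflAt α p.1, p.2)| ≤ N
    · convert isClosed_univ (X := Ed d)
      exact Set.eq_univ_of_forall fun _ _ => hp
    · simp only [hp, imp_false]
      have : IsOpen {x : Ed d | p ∈ coneT (δ / 2) (δ / 2) x} :=
        isOpen_const.inter (isOpen_const.inter (isOpen_lt (f := fun x => dist p.1 x)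
          (by fun_prop) continuous_const))
      exact this.isClosed_compl
  refine (isCompact_closedBall (0 : Ed d) N).of_isClosed_subset
    ((isClosed_le continuous_norm continuous_const).inter (h1.inter h2)) fun x hx => ?_
  simpa using hx.1

/-- The theorem on one set `goodSet`: `fatou_local` is applied to `wt · u`, and the limits are
divided by `wt`. -/
lemma goodSet_fatou {d : ℕ} {R Rp : Finset (Ed d)} {κ : Ed d → ℝ} (hRS : IsRootSystem R Rp κ)
    {u : Ed d × ℝ → ℝ} (hu : KHarmonicOn R Rp κ u (upperHS d)) {N δ : ℝ} (hδ : 0 < δ)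
    (hδ1 : δ ≤ 1) : ∀ᵐ x : Ed d, x ∈ goodSet R u N δ → HasNTLimit u x := by
  rcases (goodSet R u N δ).eq_empty_or_nonempty with h0 | h0
  · simp [h0]
  have hN : 0 ≤ N := (norm_nonneg _).trans h0.some_mem.1
  have hopen : IsOpen (upperHS d) := isOpen_lt continuous_const continuous_snd
  have hcd : ∀ p : Ed d × ℝ, 0 < p.2 → ContDiffAt ℝ 2 u p := fun p hp =>
    hu.1.contDiffAt (hopen.mem_nhds hp)
  set Q : Set (Ed d) := {x | ‖x‖ ≤ N + 1 ∧ ∀ α ∈ R, δ / 2 ≤ |⟪α, x⟫|} with hQ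
  have hQreg : ∀ x ∈ Q, isRegular R x := fun x hx α hα h => by
    have := hx.2 α hα
    rw [h, abs_zero] at this
    linarith
  have hQc : IsCompact Q := by
    have h1 : IsClosed {x : Ed d | ∀ α ∈ R, δ / 2 ≤ |⟪α, x⟫|} := by
      simp only [Set.ofPred_forall]
      exact isClosed_biInter fun α _ => isClosed_le continuous_const (by fun_prop)
    refine (isCompact_closedBall (0 : Ed d) (N + 1)).of_isClosed_subset
      ((isClosed_le continuous_norm continuous_const).inter h1) fun x hx => ?_
    simpa using hx.1
  have hcone : ∀ p : Ed d × ℝ, 0 < p.2 → p.2 < δ / 2 →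
      infDist p.1 (goodSet R u N δ) < δ / 2 * p.2 →
      p.1 ∈ Q ∧ |u p| ≤ N ∧ ∀ α ∈ R, |u (reflAt α p.1, p.2)| ≤ N := by
    intro p hp0 hph hpF
    obtain ⟨x, hx, hpx⟩ := (infDist_lt_iff h0).1 hpF
    refine ⟨⟨?_, fun α hα => ?_⟩, hx.2.2 p ⟨hp0, hph, hpx⟩⟩
    · have h1 := norm_le_norm_add_norm_sub x p.1
      rw [← dist_eq_norm, dist_comm] at h1
      have := hx.1
      nlinarith
    · have h1 := hx.2.1 α hα
      have h2 : |⟪α, x - p.1⟫| ≤ ‖α‖ * ‖x - p.1‖ := abs_real_inner_le_norm _ _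
      have h3 : ‖α‖ ≤ 2 := by
        have := hRS.norm_two α hα
        rw [real_inner_self_eq_norm_sq] at this
        nlinarith [norm_nonneg α]
      rw [← dist_eq_norm, dist_comm, inner_sub_right] at h2
      have h4 := abs_sub_abs_le_abs_sub ⟪α, x⟫ ⟪α, p.1⟫
      have h5 : ‖α‖ * dist p.1 x ≤ 2 * (δ / 2 * (δ / 2)) :=
        mul_le_mul h3 (by nlinarith) dist_nonneg (by norm_num)
      nlinarith
  -- `G` dominates both `wt * u` and its Laplacian on the sawtooth region
  set G : Ed d → ℝ := fun x => wt Rp κ x * N + (|wtLap Rp κ x| * N +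
    ∑ α ∈ Rp, |2 * κ α * wt Rp κ x / ⟪α, x⟫ ^ 2| * (2 * N)) with hG
  have hGc : ContinuousOn G Q := by
    intro x hx
    have hr : ∀ α ∈ Rp, ⟪α, x⟫ ≠ 0 := fun α hα => hQreg x hx α (hRS.pos_sub hα)
    refine ContinuousAt.continuousWithinAt ?_
    refine ((wt_continuousAt hr).mul continuousAt_const).add
      (((wtLap_continuousAt hr).abs.mul continuousAt_const).add
        (tendsto_finsetSum _ fun α hα => ?_))
    exact Tendsto.mul_const _ (ContinuousAt.abs (ContinuousAt.div
      (continuousAt_const.mul (wt_continuousAt hr)) (by fun_prop) (pow_ne_zero 2 (hr α hα))))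
  obtain ⟨M, hM⟩ := hQc.exists_bound_of_continuousOn hGc
  have hG1 : ∀ x, 0 ≤ |wtLap Rp κ x| * N + ∑ α ∈ Rp, |2 * κ α * wt Rp κ x / ⟪α, x⟫ ^ 2| * (2 * N) :=
    fun x => by positivity
  have hfat := fatou_local (goodSet_isCompact R u N δ) (a := δ / 2) (h := δ / 2) (M := max M 0)
    (by positivity) (by positivity) (le_max_right _ _) (v := fun q => wt Rp κ q.1 * u q)
    (by
      rintro p ⟨h1, h2, h3⟩
      have hQp := (hcone p h1 h2 h3).1
      have hr : ∀ α ∈ Rp, ⟪α, p.1⟫ ≠ 0 := fun α hα => hQreg _ hQp α (hRS.pos_sub hα)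
      exact (ContinuousAt.mul (ContinuousAt.comp (g := wt Rp κ) (f := Prod.fst)
        (wt_continuousAt hr) continuousAt_fst) (hcd p h1).continuousAt).continuousWithinAt)
    (by
      intro p h1 h2 h3
      obtain ⟨hQp, hup, -⟩ := hcone p h1 h2 h3
      refine le_trans ?_ (((le_abs_self _).trans (hM _ hQp)).trans (le_max_left _ _))
      rw [abs_mul, abs_of_pos (wt_pos Rp κ p.1)]
      have := mul_le_mul_of_nonneg_left hup (wt_pos Rp κ p.1).le
      have := hG1 p.1
      simp only [hG]
      linarith)
    (by
      intro p h1 h2 h3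
      obtain ⟨hQp, hup, hur⟩ := hcone p h1 h2 h3
      refine ⟨_, ?_, wt_mul_hasGLap (hcd p h1)
        (fun α hα => hQreg _ hQp α (hRS.pos_sub hα)) (hu.2 p h1 (hQreg _ hQp))⟩
      refine le_trans ?_ (((le_abs_self _).trans (hM _ hQp)).trans (le_max_left _ _))
      have t1 : 0 ≤ wt Rp κ p.1 * N := mul_nonneg (wt_pos Rp κ p.1).le hN
      refine (abs_add_le _ _).trans (le_trans (add_le_add ?_ ?_) (le_add_of_nonneg_left t1))
      · rw [abs_mul]
        exact mul_le_mul_of_nonneg_left hup (abs_nonneg _)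
      · refine (Finset.abs_sum_le_sum_abs _ _).trans (Finset.sum_le_sum fun α hα => ?_)
        rw [abs_mul]
        refine mul_le_mul_of_nonneg_left ?_ (abs_nonneg _)
        have := hur α (hRS.pos_sub hα)
        exact (abs_sub _ _).trans (by linarith))
  filter_upwards [hfat] with x hx hxF A hA
  obtain ⟨L, hL⟩ := hx hxF
  have hr : ∀ α ∈ Rp, ⟪α, x⟫ ≠ 0 := fun α hα h => by
    have := hxF.2.1 α (hRS.pos_sub hα)
    rw [h, abs_zero] at this
    linarith
  refine ⟨L / wt Rp κ x, ?_⟩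
  have hw : Tendsto (fun q : Ed d × ℝ => wt Rp κ q.1) (𝓝[cone A x] (x, (0 : ℝ)))
      (𝓝 (wt Rp κ x)) :=
    ((wt_continuousAt hr).tendsto.comp (continuous_fst.tendsto (x, (0 : ℝ)))).mono_left
      nhdsWithin_le_nhds
  refine ((hL A).div hw (wt_pos Rp κ x).ne').congr fun q => ?_
  exact mul_div_cancel_left₀ _ (wt_pos Rp κ q.1).ne'

lemma NTBounded.eventually {d : ℕ} {u : Ed d × ℝ → ℝ} {x : Ed d} (h : NTBounded u x) :
    ∀ᶠ n : ℕ in atTop, ∀ p ∈ coneT (1 / ((n : ℝ) + 1) / 2) (1 / ((n : ℝ) + 1) / 2) x,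
      |u p| ≤ n := by
  obtain ⟨a, ha, h, hh, M, hM⟩ := h
  have hlim : Tendsto (fun n : ℕ => 1 / ((n : ℝ) + 1) / 2) atTop (𝓝 0) := by
    simpa using tendsto_one_div_add_atTop_nhds_zero_nat (𝕜 := ℝ).div_const 2
  filter_upwards [hlim.eventually (gt_mem_nhds ha), hlim.eventually (gt_mem_nhds hh),
    tendsto_natCast_atTop_atTop.eventually (eventually_ge_atTop M)] with n h1 h2 h3 p hp
  obtain ⟨p1, p2, p3⟩ := hp
  exact (hM p ⟨p1, p2.trans h2, p3.trans (mul_lt_mul_of_pos_right h1 p1)⟩).trans h3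

lemma exists_goodSet {d : ℕ} {R Rp : Finset (Ed d)} {κ : Ed d → ℝ} (hRS : IsRootSystem R Rp κ)
    {u : Ed d × ℝ → ℝ} {x : Ed d} (hx : isRegular R x) (hb : NTBounded u x)
    (hbr : ∀ α ∈ R, NTBounded u (reflAt α x)) :
    ∃ n : ℕ, x ∈ goodSet R u n (1 / ((n : ℝ) + 1)) := by
  have h1 : ∀ᶠ n : ℕ in atTop, ∀ α ∈ R, 1 / ((n : ℝ) + 1) ≤ |⟪α, x⟫| :=
    (Finset.eventually_all R).2 fun α hα =>
      (tendsto_one_div_add_atTop_nhds_zero_nat (𝕜 := ℝ)).eventually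
        (ge_mem_nhds (abs_pos.2 (hx α hα)))
  have h2 := (Finset.eventually_all R).2 fun α hα => (hbr α hα).eventually
  obtain ⟨n, n1, n2, n3, n4⟩ := (h1.and (h2.and (hb.eventually.and
    (tendsto_natCast_atTop_atTop.eventually (eventually_ge_atTop ‖x‖))))).exists
  refine ⟨n, n4, n1, fun p hp => ⟨n3 p hp, fun α hα => n2 α hα _ ⟨hp.1, hp.2.1, ?_⟩⟩⟩
  simp only
  rw [dist_reflAt (hRS.norm_two α hα)]
  exact hp.2.2

lemma HasNTLimit.ntBounded {d : ℕ} {u : Ed d × ℝ → ℝ} {x : Ed d} (h : HasNTLimit u x) :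
    NTBounded u x := by
  obtain ⟨L, hL⟩ := h 1 one_pos
  have h1 := hL.abs.eventually (gt_mem_nhds (lt_add_one |L|))
  obtain ⟨r, hr, h2⟩ := Metric.mem_nhdsWithin_iff.1 h1
  refine ⟨1, one_pos, r, hr, |L| + 1, fun p hp => le_of_lt (h2 ⟨?_, hp.1, hp.2.2⟩)⟩
  obtain ⟨p1, p2, p3⟩ := hp
  rw [mem_ball, Prod.dist_eq, max_lt_iff]
  refine ⟨by simp only; linarith, ?_⟩
  simpa [abs_of_pos p1] using p2

/-! ### The equivalence -/

/-- **Theorem 1.** For a `G`-invariant measurable `E ⊆ ℝ^d` and `u` `κ`-harmonic in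
`ℝ^{d+1}₊`, `u` has a finite non-tangential limit at `(x,0)` for a.e. `x ∈ E` iff `u` is
non-tangentially bounded at `(x,0)` for a.e. `x ∈ E`. -/
theorem dunkl_fatou_ntlimit_iff_ntbounded
    {d : ℕ} (hd : 1 ≤ d) (R Rp : Finset (Ed d)) (κ : Ed d → ℝ)
    (hRS : IsRootSystem R Rp κ)
    (E : Set (Ed d)) (hEm : MeasurableSet E) (hEinv : GInvSet R E)
    (u : Ed d × ℝ → ℝ) (hu : KHarmonicOn R Rp κ u (upperHS d)) :
    (∀ᵐ x : Ed d, x ∈ E → HasNTLimit u x) ↔ (∀ᵐ x : Ed d, x ∈ E → NTBounded u x) := by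
  refine ⟨fun h => ?_, fun h => ?_⟩
  · filter_upwards [h] with x hx hxE using (hx hxE).ntBounded
  · have h1 : ∀ᵐ x : Ed d, ∀ n : ℕ, x ∈ goodSet R u n (1 / ((n : ℝ) + 1)) → HasNTLimit u x := by
      refine ae_all_iff.2 fun n => goodSet_fatou hRS hu (by positivity) ?_
      rw [div_le_one (by positivity)]
      linarith [(Nat.cast_nonneg n : (0 : ℝ) ≤ n)]
    have h2 : ∀ᵐ x : Ed d, ∀ α ∈ R, reflAt α x ∈ E → NTBounded u (reflAt α x) :=
      (ae_ball_iff R.countable_toSet).2 fun α hα => ae_reflAt (hRS.norm_two α hα) h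
    filter_upwards [h, h1, h2, ae_regular hRS.nonzero] with x hx hx1 hx2 hxr hxE
    have hrE : ∀ α ∈ R, reflAt α x ∈ E := fun α hα => by
      have h3 := hEinv (reflAt α) (Submonoid.subset_closure ⟨α, hα, rfl⟩)
      rw [← h3]
      exact ⟨x, hxE, rfl⟩
    obtain ⟨n, hn⟩ := exists_goodSet hRS hxr (hx hxE) fun α hα => hx2 α hα (hrE α hα)
    exact hx1 n hn

end
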